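/- arXiv:1701.01367 — 6 statements merged into one kernel-verified Lean document; each statement's English description precedes it below -/
import Mathlib

section
/- Let F be a field of characteristic p > 0, let n ≥ 1, let a₁, …, aₙ ∈ F^×, let b ∈ F ∖ ℘(F), and suppose β = N_{F_b/F}(u) ≠ 0 for some u ∈ F_b. Then for every i ∈ {1, …, n}, the classes of b·(da₁/a₁)∧…∧(daᵢ/aᵢ)∧…∧(daₙ/aₙ) and of b·(da₁/a₁)∧…∧(d(aᵢβ)/(aᵢβ))∧…∧(daₙ/aₙ) are equal in H^{n+1}(F). -/
/-!
Since `dlog (aᵢ β) = dlog aᵢ + dlog β`, the claim is that `b dlog β`, wedged with the other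
`dlog aⱼ`, is zero in `H^{n+1}(F)`. Wedging with these closed forms sends `dF` to exact forms and
`(c ^ p - c) dlog x` to forms of the same shape (`slot_exact_mem`, `slot_dlog`), so the case of
`1`-forms is enough (`norm_dlog_mem`).

Let `E = F(θ)`, `θ ^ p - θ = b`, a Galois extension of `F`. As `E / F` is étale,
`Ω¹(E) = E ⊗ Ω¹(F)`, and the trace of `E / F` extends to forms. It commutes with `d` and satisfies
`tr (dlog u) = dlog N(u)` (`exists_trace_derivation`). Therefore `b dlog N(u)` is the trace of
`(θ ^ p - θ) dlog u`, and it suffices to see that the trace sends every `(e ^ p - e) dlog u` to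
a relation over `F`.

This is clear for `u ∈ F`, because `tr (e ^ p) = tr(e) ^ p`. For general `u`, consider the `x ∈ E` such
that `e ^ p x ^ (p - 1) dx - e dx` has trace a relation for all `e`. They are stable under products by
the Leibniz rule, and under sums because `x ↦ x ^ (p - 1) dx` is additive modulo exact forms and
`e ^ p` times an exact form is exact (`cartier_add_one`). They contain `F` and also all `p`-th powers,
whose differentials vanish. As `θ = θ ^ p - b`, they are all of `E` (`cartier_mem`).
-/

/-!
STATEMENT 1 (Lemma on differential forms, part (b)):
Let `F` be a field of characteristic `p > 0`, `n ≥ 1`, `a₁, …, aₙ ∈ F^×`,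
`b ∈ F ∖ ℘(F)`, and suppose `β = N_{F_b/F}(u) ≠ 0` for some `u ∈ F_b`, where
`F_b = F[T]/(T^p − T − b)` and the norm is the determinant of multiplication.
Then for every `i`, the classes of `b·(da₁/a₁)∧…∧(daᵢ/aᵢ)∧…∧(daₙ/aₙ)` and of
`b·(da₁/a₁)∧…∧(d(aᵢβ)/(aᵢβ))∧…∧(daₙ/aₙ)` agree in `H^{n+1}(F)`.

`H^{n+1}(F)` is the cokernel of the Artin–Schreier map
`℘ : Ω^n(F) → Ω^n(F)/dΩ^{n-1}(F)`, `c·dlog a₁∧…∧dlog aₙ ↦ (c^p−c)·dlog a₁∧…∧dlog aₙ`.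
Since `Ω^n(F)` is generated as an additive group by logarithmic differentials, this
cokernel is the quotient of `Ω^n(F)` by the subgroup generated by `dΩ^{n-1}(F)`
together with all elements `(c^p−c)·(da₁/a₁)∧…∧(daₙ/aₙ)`.
-/

noncomputable section

open Polynomial

/-- The absolute differential `d : F → Ω^1(F)`. -/
def absD (F : Type*) [Field F] : F → KaehlerDifferential ℤ F :=
  fun a => KaehlerDifferential.D ℤ F a

/-- The wedge `ω₁ ∧ … ∧ ωₙ` of `n` differential 1-forms, as an element of
`Ω^n(F) = ⋀[F]^n Ω^1(F)`. -/
def wedge (F : Type*) [Field F] (n : ℕ) (v : Fin n → KaehlerDifferential ℤ F) :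
    ⋀[F]^n (KaehlerDifferential ℤ F) :=
  ⟨ExteriorAlgebra.ιMulti F n v, ExteriorAlgebra.ιMulti_range F n (Set.mem_range_self v)⟩

/-- The logarithmic differential form `b·(da₁/a₁) ∧ … ∧ (daₙ/aₙ) ∈ Ω^n(F)`. -/
def logForm (F : Type*) [Field F] (n : ℕ) (b : F) (a : Fin n → F) :
    ⋀[F]^n (KaehlerDifferential ℤ F) :=
  b • wedge F n (fun j => (a j)⁻¹ • absD F (a j))

/-- The subgroup `dΩ^{n-1}(F)` of `Ω^n(F)`: the image of `d : Ω^{n-1}(F) → Ω^n(F)`,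
i.e. the additive subgroup generated by all `dc₁ ∧ … ∧ dcₙ`. -/
def dOmega (F : Type*) [Field F] (n : ℕ) :
    AddSubgroup (⋀[F]^n (KaehlerDifferential ℤ F)) :=
  AddSubgroup.closure {ω | ∃ c : Fin n → F, ω = wedge F n (fun j => absD F (c j))}

/-- The subgroup of `Ω^n(F)` whose quotient defines `H^{n+1}(F)`: it is generated by
`dΩ^{n-1}(F)` together with the image of the Artin–Schreier map, i.e. all elements
`(c^p − c)·(da₁/a₁)∧…∧(daₙ/aₙ)` with `c ∈ F`, `a₁,…,aₙ ∈ F^×`. -/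
def hRel (F : Type*) [Field F] (p n : ℕ) :
    AddSubgroup (⋀[F]^n (KaehlerDifferential ℤ F)) :=
  dOmega F n ⊔ AddSubgroup.closure
    {ω | ∃ (c : F) (a : Fin n → F), (∀ j, a j ≠ 0) ∧ ω = logForm F n (c ^ p - c) a}

/-- `H^{n+1}(F)`, the cokernel of the Artin–Schreier map
`℘ : Ω^n(F) → Ω^n(F)/dΩ^{n-1}(F)`. -/
def Hgroup (F : Type*) [Field F] (p n : ℕ) :=
  (⋀[F]^n (KaehlerDifferential ℤ F)) ⧸ hRel F p n

/-- The class of an `n`-form in `H^{n+1}(F)`. -/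
def hClass (F : Type*) [Field F] (p n : ℕ) (ω : ⋀[F]^n (KaehlerDifferential ℤ F)) :
    Hgroup F p n :=
  QuotientAddGroup.mk' (hRel F p n) ω

open scoped TensorProduct KaehlerDifferential

/-! ### Artin–Schreier extensions -/

/-- A field generated by a root `θ` of `X ^ p - X - b` is Galois: with `θ` it contains all the
roots `θ + k`, `k ∈ 𝔽_p`, of this separable polynomial. -/
theorem isGalois_of_artinSchreier {F E : Type*} [Field F] [Field E] [Algebra F E] (p : ℕ)
    [Fact p.Prime] [CharP F p] {b : F} {θ : E} (hθ : θ ^ p - θ = algebraMap F E b)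
    (htop : Algebra.adjoin F {θ} = ⊤) : IsGalois F E := by
  have hp1 : 1 < p := (Fact.out : p.Prime).one_lt
  have : CharP E p := charP_of_injective_algebraMap (algebraMap F E).injective p
  set f : F[X] := X ^ p - X - C b with hf
  have hmap : f.map (algebraMap F E) =
      (((X ^ p - X : (ZMod p)[X]).map (ZMod.castHom dvd_rfl E)).comp (X - C θ)) := by
    simp only [hf, Polynomial.map_sub, Polynomial.map_pow, map_X, map_C, sub_comp, pow_comp, X_comp,
      sub_pow_char, ← hθ, C_sub, C_pow]
    ring
  have hsep : f.Separable := by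
    have hd : derivative f = -1 := by
      simp [hf, derivative_X_pow, CharP.cast_eq_zero]
    rw [separable_def, hd]
    exact isCoprime_one_right.neg_right
  have hfm : f.Monic := by
    have : f = X ^ p - (X + C b) := by rw [hf]; ring
    rw [this]
    apply monic_X_pow_sub
    rw [degree_X_add_C]
    exact_mod_cast hp1
  have : IsSplittingField F E f := by
    refine ⟨?_, ?_⟩
    · rw [hmap]
      exact ((GaloisField.splits_zmod_X_pow_sub_X p).map _).comp_X_sub_C _
    · rw [eq_top_iff, ← htop]
      apply Algebra.adjoin_mono
      rw [Set.singleton_subset_iff, mem_rootSet]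
      refine ⟨hfm.ne_zero, ?_⟩
      simp [hf, hθ]
  exact IsGalois.of_separable_splitting_field hsep

theorem trace_pow_char {F E : Type*} [Field F] [Field E] [Algebra F E] (p : ℕ)
    [Fact p.Prime] [CharP F p] [FiniteDimensional F E] [IsGalois F E] (x : E) :
    Algebra.trace F E (x ^ p) = Algebra.trace F E x ^ p := by
  have : CharP E p := charP_of_injective_algebraMap (algebraMap F E).injective p
  apply (algebraMap F E).injective
  rw [(algebraMap F E).map_pow, trace_eq_sum_automorphisms,
    trace_eq_sum_automorphisms, sum_pow_char p]
  simp

/-- If `K = F(α)` for a root `α` of an irreducible factor of degree `d < p`, then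
`b = α ^ p - α` has trace `d * b = t ^ p - t` with `t` the trace of `α`; since `d ≠ 0` lies in the
prime field, `b = (t / d) ^ p - t / d`. -/
theorem irreducible_artinSchreier {F : Type*} [Field F] (p : ℕ)
    [Fact p.Prime] [CharP F p] (b : F) (hb : ∀ x : F, b ≠ x ^ p - x) :
    Irreducible (X ^ p - X - C b : F[X]) := by
  have hp1 : 1 < p := (Fact.out : p.Prime).one_lt
  have hfe : (X ^ p - X - C b : F[X]) = X ^ p - (X + C b) := by ring
  have hfd : (X ^ p - X - C b : F[X]).natDegree = p := by
    rw [hfe]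
    rw [natDegree_sub_eq_left_of_natDegree_lt] <;> simp [hp1]
  set f : F[X] := X ^ p - X - C b with hf
  have hf0 : f ≠ 0 := by
    intro h
    rw [h, natDegree_zero] at hfd
    omega
  obtain ⟨q, hq, hqf⟩ := exists_irreducible_of_natDegree_pos (f := f) (by omega)
  have : Fact (Irreducible q) := ⟨hq⟩
  have hroot : AdjoinRoot.root q ^ p - AdjoinRoot.root q = algebraMap F (AdjoinRoot q) b := by
    have h1 : AdjoinRoot.mk q f = 0 := AdjoinRoot.mk_eq_zero.2 hqf
    simpa [hf, sub_eq_zero] using h1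
  have := isGalois_of_artinSchreier p hroot AdjoinRoot.adjoinRoot_eq_top
  have : FiniteDimensional F (AdjoinRoot q) := (AdjoinRoot.powerBasis hq.ne_zero).finite
  have hfr : Module.finrank F (AdjoinRoot q) = q.natDegree := by
    rw [(AdjoinRoot.powerBasis hq.ne_zero).finrank, AdjoinRoot.powerBasis_dim]
  have htr := congrArg (Algebra.trace F (AdjoinRoot q)) hroot
  rw [map_sub, trace_pow_char p, Algebra.trace_algebraMap, hfr, nsmul_eq_mul] at htr
  set t := Algebra.trace F (AdjoinRoot q) (AdjoinRoot.root q)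
  have hle : q.natDegree ≤ p := hfd ▸ natDegree_le_of_dvd hqf hf0
  have hpos : 0 < q.natDegree := hq.natDegree_pos
  -- Otherwise the trace of the root, divided by the degree, would solve `x ^ p - x = b` in `F`.
  have hdvd : p ∣ q.natDegree := by
    by_contra hnd
    have hd0 : (q.natDegree : F) ≠ 0 := fun h => hnd ((CharP.cast_eq_zero_iff F p _).1 h)
    apply hb (t / q.natDegree)
    have hfrob : (q.natDegree : F) ^ p = q.natDegree := by
      rw [← frobenius_def, map_natCast]
    rw [div_pow, hfrob, ← sub_div, htr, mul_div_cancel_left₀ _ hd0]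
  have hdeg : q.natDegree = f.natDegree := by
    rw [hfd]; exact le_antisymm hle (Nat.le_of_dvd hpos hdvd)
  exact (associated_of_dvd_of_natDegree_le hqf hf0 hdeg.ge).irreducible hq

/-! ### The inverse Cartier operator modulo exact forms -/

/-- Modulo exact forms, `x ↦ x ^ (p - 1) dx` is unchanged by `x ↦ x + 1`: differentiate
`W = ((X + 1) ^ p - X ^ p - 1) / p`, a polynomial with integer coefficients. -/
theorem cartier_add_one {E N : Type*} [CommRing E] [AddCommGroup N] [Module E N] (p : ℕ)
    [hp : Fact p.Prime] (δ : Derivation ℤ E N) (x : E) :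
    ∃ y, (x + 1) ^ (p - 1) • δ x = x ^ (p - 1) • δ x + δ y := by
  have h := add_pow_prime_eq hp.out (X : ℤ[X]) 1
  set W : ℤ[X] := X * 1 * ∑ k ∈ Finset.Ioo 0 p, X ^ (k - 1) * 1 ^ (p - k - 1) * ↑(p.choose k / p)
  have h' : (X + 1 : ℤ[X]) ^ p = X ^ p + 1 + (p : ℤ[X]) * W := by
    rw [h]; simp only [W]; ring
  have hW : (X + 1 : ℤ[X]) ^ (p - 1) = X ^ (p - 1) + derivative W := by
    have hd := congrArg derivative h'
    simp only [derivative_pow, derivative_add, derivative_X, derivative_one, derivative_mul,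
      derivative_natCast, map_natCast] at hd
    have hp0 : (p : ℤ[X]) ≠ 0 := by exact_mod_cast hp.out.ne_zero
    apply mul_left_cancel₀ hp0
    linear_combination hd
  refine ⟨aeval x W, ?_⟩
  rw [Derivation.map_aeval, ← add_smul]
  congr 1
  simpa using congrArg (aeval x) hW

/-- The extension is generated as a ring by `F` and by `p`-th powers, because `θ = θ ^ p - b`.
Hence a property of elements that holds on these and is stable under sums and products holds
everywhere. -/
theorem artinSchreier_induction {F E : Type*} [Field F] [Field E] [Algebra F E] (p : ℕ) {b : F}
    {θ : E} (hθ : θ ^ p - θ = algebraMap F E b) (htop : Algebra.adjoin F {θ} = ⊤)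
    (P : E → Prop) (hF : ∀ a : F, P (algebraMap F E a)) (hpow : ∀ x, P (x ^ p))
    (hadd : ∀ x y, P x → P y → P (x + y)) (hmul : ∀ x y, P x → P y → P (x * y)) (x : E) : P x := by
  have hx : x ∈ Algebra.adjoin F {θ} := htop ▸ Algebra.mem_top
  induction hx using Algebra.adjoin_induction with
  | mem y hy =>
    rw [Set.mem_singleton_iff] at hy
    have : y = θ ^ p + algebraMap F E (-b) := by rw [hy, map_neg, ← hθ]; ring
    rw [this]
    exact hadd _ _ (hpow _) (hF _)
  | algebraMap r => exact hF r
  | add x y _ _ hx hy => exact hadd x y hx hy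
  | mul x y _ _ hx hy => exact hmul x y hx hy

theorem derivation_pow_char {E N : Type*} [CommRing E] [AddCommGroup N] [Module E N] (p : ℕ)
    [CharP E p] (δ : Derivation ℤ E N) (x : E) : δ (x ^ p) = 0 := by
  rw [Derivation.leibniz_pow, ← Nat.cast_smul_eq_nsmul E, CharP.cast_eq_zero, zero_smul]

/-! ### The trace of differential forms -/

/-- The identification `Ω¹(E) = E ⊗ Ω¹(F)`, valid since `E / F` is étale, turns the universal
derivation of `E` into a derivation `δ` extending `d`. The trace `E → F` induces a trace of forms,
which commutes with `d` and sends `dlog u` to `dlog N(u)`. -/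
theorem exists_trace_derivation {F E : Type*} [Field F] [Field E] [Algebra F E] (p : ℕ)
    [Fact p.Prime] [CharP F p] {b : F} {θ : E} (hθ : θ ^ p - θ = algebraMap F E b)
    (htop : Algebra.adjoin F {θ} = ⊤) [FiniteDimensional F E] [IsGalois F E] :
    ∃ (δ : Derivation ℤ E (E ⊗[F] Ω[F⁄ℤ])) (tr : (E ⊗[F] Ω[F⁄ℤ]) →ₗ[F] Ω[F⁄ℤ]),
      (∀ a : F, δ (algebraMap F E a) = 1 ⊗ₜ KaehlerDifferential.D ℤ F a) ∧
      (∀ (e : E) ω, tr (e ⊗ₜ ω) = Algebra.trace F E e • ω) ∧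
      (∀ x, tr (δ x) = KaehlerDifferential.D ℤ F (Algebra.trace F E x)) ∧
      ∀ u, u ≠ 0 → tr (u⁻¹ • δ u) =
        (Algebra.norm F u)⁻¹ • KaehlerDifferential.D ℤ F (Algebra.norm F u) := by
  have : CharP E p := charP_of_injective_algebraMap (algebraMap F E).injective p
  have : Algebra.FormallyEtale F E := Algebra.FormallyEtale.of_isSeparable F E
  let d := KaehlerDifferential.D ℤ F
  let δ : Derivation ℤ E (E ⊗[F] Ω[F⁄ℤ]) :=
    (KaehlerDifferential.tensorKaehlerEquivOfFormallyEtale ℤ F E).symm.toLinearMap.compDer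
      (KaehlerDifferential.D ℤ E)
  have hδF : ∀ a : F, δ (algebraMap F E a) = 1 ⊗ₜ d a := fun a =>
    KaehlerDifferential.tensorKaehlerEquivOfFormallyEtale_symm_D_algebraMap ℤ F E a
  -- The Galois group acts on the first tensor factor; this is its natural action on forms.
  let s : (E ≃ₐ[F] E) → (E ⊗[F] Ω[F⁄ℤ]) →ₗ[F] (E ⊗[F] Ω[F⁄ℤ]) := fun σ =>
    LinearMap.rTensor _ σ.toLinearMap
  have hssmul : ∀ σ (e : E) x, s σ (e • x) = σ e • s σ x := by
    intro σ e x
    induction x using TensorProduct.induction_on with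
    | zero => simp
    | tmul y ω => simp [s, TensorProduct.smul_tmul']
    | add x y hx hy => simp only [smul_add, map_add, hx, hy]
  have hsδ : ∀ σ (x : E), s σ (δ x) = δ (σ x) := by
    intro σ x
    refine artinSchreier_induction p hθ htop (fun x => s σ (δ x) = δ (σ x)) ?_ ?_ ?_ ?_ x
    · intro a
      rw [AlgEquiv.commutes, hδF]
      simp [s]
    · intro x
      rw [map_pow σ, derivation_pow_char p, derivation_pow_char p, map_zero]
    · intro x y hx hy
      simp only [map_add, hx, hy]
    · intro x y hx hy
      rw [Derivation.leibniz, map_add, hssmul, hssmul, hx, hy, map_mul, Derivation.leibniz]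
  let tr : (E ⊗[F] Ω[F⁄ℤ]) →ₗ[F] Ω[F⁄ℤ] :=
    (TensorProduct.lid F _).toLinearMap ∘ₗ LinearMap.rTensor _ (Algebra.trace F E)
  have htrt : ∀ (e : E) ω, tr (e ⊗ₜ ω) = Algebra.trace F E e • ω := by
    intro e ω
    simp [tr]
  have htr : ∀ x, (1 : E) ⊗ₜ[F] tr x = ∑ σ, s σ x := by
    intro x
    induction x using TensorProduct.induction_on with
    | zero => simp
    | tmul y ω =>
      rw [htrt, TensorProduct.tmul_smul, TensorProduct.smul_tmul', Algebra.smul_def, mul_one,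
        trace_eq_sum_automorphisms, TensorProduct.sum_tmul]
      simp [s]
    | add x y hx hy => simp only [TensorProduct.tmul_add, map_add, hx, hy, Finset.sum_add_distrib]
  -- Identities in `Ω¹(F)` may be checked after extending scalars to `E`, where `tr` is `∑ σ, σ`.
  have hinj : Function.Injective fun ω : Ω[F⁄ℤ] => (1 : E) ⊗ₜ[F] ω :=
    Module.FaithfullyFlat.tensorProduct_mk_injective (A := F) (B := E) _
  have htrδ : ∀ x, tr (δ x) = d (Algebra.trace F E x) := by
    intro x
    apply hinj
    simp only [htr, hsδ]
    rw [← hδF, trace_eq_sum_automorphisms, map_sum]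
  refine ⟨δ, tr, hδF, htrt, htrδ, fun u hu => ?_⟩
  apply hinj
  have hprod : ∀ t : Finset (E ≃ₐ[F] E),
      δ (∏ σ ∈ t, σ u) = (∏ σ ∈ t, σ u) • ∑ σ ∈ t, (σ u)⁻¹ • δ (σ u) := by
    intro t
    induction t using Finset.cons_induction with
    | empty => simp
    | cons σ t hσ ih =>
      have : σ u ≠ 0 := by simpa using hu
      rw [Finset.prod_cons, Finset.sum_cons, Derivation.leibniz, ih, smul_add, ← mul_smul,
        ← mul_smul, mul_right_comm, mul_inv_cancel₀ this, one_mul, add_comm]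
  have hN : algebraMap F E (Algebra.norm F u) ≠ 0 := by
    rw [Ne, map_eq_zero]
    exact Algebra.norm_ne_zero_iff.2 hu
  simp only [htr, hssmul, hsδ, map_inv₀]
  rw [TensorProduct.tmul_smul, ← hδF, ← algebraMap_smul E, map_inv₀,
    Algebra.norm_eq_prod_automorphisms, hprod, ← mul_smul, inv_mul_cancel₀, one_smul]
  rwa [← Algebra.norm_eq_prod_automorphisms]

/-! ### Relations over the extension -/

/-- The form `x⁻¹ dx` is fixed by the inverse Cartier operator, stated without dividing by `x`: for
all coefficients `e`, the form `e ^ p x ^ (p - 1) dx - e dx` lies in every subgroup `H` that contains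
all `e ^ p dy` (these are exact) and these expressions for `x ∈ F`. The set of `x` with this property is a ring
containing `F` and all `p`-th powers. -/
theorem cartier_mem {F E N : Type*} [Field F] [Field E] [Algebra F E] [AddCommGroup N]
    [Module E N] (p : ℕ) [hp : Fact p.Prime] [CharP E p] {b : F} {θ : E}
    (hθ : θ ^ p - θ = algebraMap F E b) (htop : Algebra.adjoin F {θ} = ⊤)
    (δ : Derivation ℤ E N) (H : AddSubgroup N) (hexact : ∀ e x : E, e ^ p • δ x ∈ H)
    (hF : ∀ (a : F) (e : E), (e ^ p * algebraMap F E a ^ (p - 1)) • δ (algebraMap F E a)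
      - e • δ (algebraMap F E a) ∈ H) (x e : E) :
    (e ^ p * x ^ (p - 1)) • δ x - e • δ x ∈ H := by
  have hpp : ∀ x : E, x ^ (p - 1) * x = x ^ p := fun x => pow_sub_one_mul hp.out.ne_zero x
  have hmul : ∀ x y : E, (∀ e : E, ((e ^ p * x ^ (p - 1)) • δ x - e • δ x) ∈ H) →
      (∀ e : E, ((e ^ p * y ^ (p - 1)) • δ y - e • δ y) ∈ H) →
      ∀ e : E, ((e ^ p * (x * y) ^ (p - 1)) • δ (x * y) - e • δ (x * y)) ∈ H := by
    intro x y hx hy e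
    have := H.add_mem (hx (e * y)) (hy (e * x))
    convert this using 1
    rw [Derivation.leibniz]
    simp only [mul_pow, ← hpp]
    module
  have hpw : ∀ x e : E, ((e ^ p * (x ^ p) ^ (p - 1)) • δ (x ^ p) - e • δ (x ^ p)) ∈ H := by
    intro x e
    rw [derivation_pow_char p]
    simp
  refine artinSchreier_induction p hθ htop
    (fun x => ∀ e : E, ((e ^ p * x ^ (p - 1)) • δ x - e • δ x) ∈ H) hF hpw ?_ hmul x e
  · intro x y hx hy e
    by_cases hy0 : y = 0
    · simpa [hy0] using hx e
    -- The case `y = 1` suffices, because `x + y = (x * y⁻¹ + 1) * y`, once `y⁻¹` is known to have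
    -- the property: it is a `p`-th power times a power of `y`.
    have hyp : y⁻¹ = (y⁻¹) ^ p * y ^ (p - 1) := by
      rw [← pow_sub_one_mul hp.out.ne_zero y⁻¹, mul_right_comm, ← mul_pow, inv_mul_cancel₀ hy0,
        one_pow, one_mul]
    have hpown : ∀ k : ℕ, ∀ e : E, ((e ^ p * (y ^ k) ^ (p - 1)) • δ (y ^ k) - e • δ (y ^ k)) ∈ H := by
      intro k
      induction k with
      | zero => intro e; simp
      | succ k ih => rw [pow_succ]; exact hmul _ _ ih hy
    have hz := hmul x y⁻¹ hx (by
      rw [hyp]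
      exact hmul _ _ (hpw _) (hpown _))
    have hz1 : ∀ e : E, ((e ^ p * (x * y⁻¹ + 1) ^ (p - 1)) • δ (x * y⁻¹ + 1)
        - e • δ (x * y⁻¹ + 1)) ∈ H := by
      intro e
      obtain ⟨w, hw⟩ := cartier_add_one p δ (x * y⁻¹)
      have := H.add_mem (hz e) (hexact e w)
      convert this using 1
      rw [map_add, Derivation.map_one_eq_zero, add_zero, mul_smul, hw]
      module
    have := hmul _ _ hz1 hy e
    rwa [add_mul, one_mul, inv_mul_cancel_right₀ hy0] at this

theorem dlog_mem {F E N : Type*} [Field F] [Field E] [Algebra F E] [AddCommGroup N]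
    [Module E N] (p : ℕ) [hp : Fact p.Prime] [CharP E p] {b : F} {θ : E}
    (hθ : θ ^ p - θ = algebraMap F E b) (htop : Algebra.adjoin F {θ} = ⊤)
    (δ : Derivation ℤ E N) (H : AddSubgroup N) (hexact : ∀ x : E, δ x ∈ H)
    (hF : ∀ (a : F) (e : E), (e ^ p * algebraMap F E a ^ (p - 1)) • δ (algebraMap F E a)
      - e • δ (algebraMap F E a) ∈ H) {u : E} (hu : u ≠ 0) (e : E) :
    (e ^ p - e) • u⁻¹ • δ u ∈ H := by
  have h := cartier_mem p hθ htop δ H (fun e x => ?_) hF u (e * u⁻¹)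
  · convert h using 1
    rw [← mul_smul, ← sub_smul]
    congr 1
    rw [mul_pow, ← pow_sub_one_mul hp.out.ne_zero u⁻¹, inv_pow]
    field_simp
  · have : e ^ p • δ x = δ (e ^ p * x) := by
      rw [Derivation.leibniz, derivation_pow_char p, smul_zero, add_zero]
    rw [this]
    exact hexact _

/-- The case of `1`-forms: `b dlog N(u)` lies in every subgroup `G` of `Ω¹(F)`
containing all `dc` and all `(c ^ p - c) dlog a`. It is the trace of `(θ ^ p - θ) dlog u`. -/
theorem norm_dlog_mem {F E : Type*} [Field F] [Field E] [Algebra F E] (p : ℕ)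
    [hp : Fact p.Prime] [CharP F p] {b : F} {θ : E} (hθ : θ ^ p - θ = algebraMap F E b)
    (htop : Algebra.adjoin F {θ} = ⊤) [FiniteDimensional F E]
    (G : AddSubgroup (Ω[F⁄ℤ])) (hG1 : ∀ c : F, KaehlerDifferential.D ℤ F c ∈ G)
    (hG2 : ∀ c a : F, a ≠ 0 → (c ^ p - c) • a⁻¹ • KaehlerDifferential.D ℤ F a ∈ G)
    (u : E) (hu : u ≠ 0) :
    b • (Algebra.norm F u)⁻¹ • KaehlerDifferential.D ℤ F (Algebra.norm F u) ∈ G := by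
  have : IsGalois F E := isGalois_of_artinSchreier p hθ htop
  have : CharP E p := charP_of_injective_algebraMap (algebraMap F E).injective p
  obtain ⟨δ, tr, hδF, htrt, htrδ, htrdlog⟩ := exists_trace_derivation p hθ htop
  have hfin := dlog_mem p hθ htop δ (G.comap tr.toAddMonoidHom)
    (fun x => ?_) (fun a e => ?_) hu θ
  · rwa [hθ, algebraMap_smul, AddSubgroup.mem_comap, LinearMap.toAddMonoidHom_coe, map_smul,
      htrdlog u hu] at hfin
  · rw [AddSubgroup.mem_comap, LinearMap.toAddMonoidHom_coe, htrδ]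
    exact hG1 _
  · rw [AddSubgroup.mem_comap, LinearMap.toAddMonoidHom_coe, hδF, map_sub,
      TensorProduct.smul_tmul', TensorProduct.smul_tmul', htrt, htrt]
    by_cases ha : a = 0
    · simp [ha]
    have h := hG2 (Algebra.trace F E (e * algebraMap F E a)) a ha
    have h1 : Algebra.trace F E (e * algebraMap F E a) = Algebra.trace F E e * a := by
      rw [mul_comm, ← Algebra.smul_def, map_smul, smul_eq_mul, mul_comm]
    have h2 : Algebra.trace F E ((e ^ p * algebraMap F E a ^ (p - 1)) • (1 : E)) =
        Algebra.trace F E e ^ p * a ^ (p - 1) := by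
      rw [smul_eq_mul, mul_one, ← map_pow, mul_comm, ← Algebra.smul_def, map_smul, smul_eq_mul,
        mul_comm, trace_pow_char p]
    rw [h2, smul_eq_mul, mul_one]
    convert h using 1
    rw [h1, ← sub_smul, ← mul_smul]
    congr 1
    rw [mul_pow, ← pow_sub_one_mul hp.out.ne_zero a]
    field_simp

/-! ### From `1`-forms to `n`-forms -/

/-- The `F`-linear map `Ω¹(F) → Ωⁿ(F)` that puts a `1`-form in the `i`-th place of the wedge product
of the family `v` (whose own `i`-th entry is discarded). -/
abbrev slot {F : Type*} [Field F] {n : ℕ} (v : Fin n → Ω[F⁄ℤ]) (i : Fin n) :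
    Ω[F⁄ℤ] →ₗ[F] ⋀[F]^n (Ω[F⁄ℤ]) :=
  (exteriorPower.ιMulti F n).toMultilinearMap.toLinearMap v i

/-- The form `dc ∧ ⋀_{j ≠ i} dlog aⱼ` (with `dc` in place `i`) is exact. Each factor `aⱼ⁻¹` can be
moved inside the differential, since `d (aⱼ⁻¹ c)` and `aⱼ⁻¹ dc` differ by a multiple of `daⱼ`, which
already occurs in the wedge product. -/
theorem slot_exact_mem {F : Type*} [Field F] {n : ℕ} (a : Fin n → F) (i : Fin n) (c : F) :
    slot (fun j => (a j)⁻¹ • absD F (a j)) i (absD F c) ∈ dOmega F n := by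
  let W := slot (fun j => absD F (a j)) i
  have hW : ∀ c, W (absD F c) ∈ dOmega F n := by
    intro c
    apply AddSubgroup.subset_closure
    refine ⟨Function.update a i c, ?_⟩
    change exteriorPower.ιMulti F n _ = exteriorPower.ιMulti F n _
    congr 1
    ext j
    by_cases h : j = i
    · subst h; simp
    · simp [h]
  have hprod : ∀ s : Finset (Fin n), i ∉ s → ∀ c,
      (∏ j ∈ s, (a j)⁻¹) • W (absD F c) ∈ dOmega F n := by
    intro s
    induction s using Finset.cons_induction with
    | empty => intro _ c; simpa using hW c
    | cons j s hj ih =>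
      intro hi c
      rw [Finset.mem_cons, not_or] at hi
      have h0 : W (absD F (a j)) = 0 :=
        (exteriorPower.ιMulti F n).map_update_self (fun j => absD F (a j)) hi.1
      have h1 : (a j)⁻¹ • absD F c = absD F ((a j)⁻¹ * c) + (c * (a j)⁻¹ ^ 2) • absD F (a j) := by
        simp only [absD, Derivation.leibniz, Derivation.leibniz_inv]
        module
      have h2 : (a j)⁻¹ • W (absD F c) = W (absD F ((a j)⁻¹ * c)) := by
        rw [← map_smul, h1, map_add, map_smul, h0, smul_zero, add_zero]
      rw [Finset.prod_cons, mul_comm, mul_smul, h2]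
      exact ih hi.2 _
  have hmem := hprod (Finset.univ.erase i) (Finset.notMem_erase _ _) c
  convert hmem using 1
  have h := (exteriorPower.ιMulti F n).toMultilinearMap.map_smul_univ
    (Function.update (fun j => (a j)⁻¹) i 1) (Function.update (fun j => absD F (a j)) i (absD F c))
  rw [Finset.prod_update_of_mem (Finset.mem_univ i), one_mul, ← Finset.erase_eq] at h
  refine Eq.trans ?_ h
  change exteriorPower.ιMulti F n _ = exteriorPower.ιMulti F n _
  congr 1
  ext j
  by_cases h : j = i
  · subst h; simp
  · simp [h]

theorem slot_dlog {F : Type*} [Field F] {n : ℕ} (a : Fin n → F) (i : Fin n) (b x : F) :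
    slot (fun j => (a j)⁻¹ • absD F (a j)) i (b • x⁻¹ • absD F x) =
      logForm F n b (Function.update a i x) := by
  rw [map_smul]
  change b • exteriorPower.ιMulti F n _ = b • exteriorPower.ιMulti F n _
  congr 2
  ext j
  by_cases h : j = i
  · subst h; simp
  · simp [h]

theorem statement1 (F : Type*) [Field F] (p : ℕ) [Fact p.Prime] [CharP F p]
    (n : ℕ) (hn : 1 ≤ n) (a : Fin n → F) (ha : ∀ i, a i ≠ 0)
    (b : F) (hb : ∀ x : F, b ≠ x ^ p - x)
    (u : AdjoinRoot (X ^ p - X - C b : F[X])) (β : F)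
    (hβ : β = Algebra.norm F u) (hβ0 : β ≠ 0) (i : Fin n) :
    hClass F p n (logForm F n b a) =
      hClass F p n (logForm F n b (Function.update a i (a i * β))) := by
  have hirr := irreducible_artinSchreier p b hb
  have : Fact (Irreducible (X ^ p - X - C b : F[X])) := ⟨hirr⟩
  have : FiniteDimensional F (AdjoinRoot (X ^ p - X - C b : F[X])) :=
    (AdjoinRoot.powerBasis hirr.ne_zero).finite
  have hroot : AdjoinRoot.root (X ^ p - X - C b : F[X]) ^ p - AdjoinRoot.root _ =
      algebraMap F (AdjoinRoot (X ^ p - X - C b : F[X])) b := by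
    have h1 := AdjoinRoot.mk_self (f := (X ^ p - X - C b : F[X]))
    rw [map_sub, map_sub, map_pow, AdjoinRoot.mk_X, AdjoinRoot.mk_C, sub_eq_zero] at h1
    exact h1
  have hu : u ≠ 0 := by
    rintro rfl
    exact hβ0 (hβ.trans (Algebra.norm_zero))
  let w := slot (fun j => (a j)⁻¹ • absD F (a j)) i
  have hmem : w (b • β⁻¹ • absD F β) ∈ hRel F p n := by
    rw [hβ]
    refine norm_dlog_mem p hroot AdjoinRoot.adjoinRoot_eq_top
      ((hRel F p n).comap w.toAddMonoidHom) (fun c => ?_) (fun c x hx => ?_) u hu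
    · exact (le_sup_left : dOmega F n ≤ _) (slot_exact_mem a i c)
    · refine (le_sup_right : _ ≤ hRel F p n) (AddSubgroup.subset_closure
        ⟨c, Function.update a i x, fun j => ?_, slot_dlog a i _ x⟩)
      by_cases h : j = i
      · subst h; simpa using hx
      · simpa [h] using ha j
  have hai : (a i * β)⁻¹ • absD F (a i * β) =
      (a i)⁻¹ • absD F (a i) + β⁻¹ • absD F β := by
    simp only [absD, Derivation.leibniz, smul_add, ← mul_smul]
    rw [add_comm]
    congr 2
    · field_simp [ha i]
    · field_simp [ha i]
  refine (QuotientAddGroup.eq (s := hRel F p n)).2 ?_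
  have h1 : logForm F n b a = w (b • (a i)⁻¹ • absD F (a i)) := by
    rw [slot_dlog, Function.update_eq_self]
  rw [← slot_dlog, hai, h1, smul_add, map_add, neg_add_cancel_left]
  exact hmem

end
end

section
/- Let F be a field of characteristic p > 0, let α ∈ F and β ∈ F^×. Then there exist α₁, α₂ ∈ F and u ∈ F^× such that α = α₁ + α₂ and, in H²(F), one has the equalities of classes α·(dβ/β) = α₁·(dβ/β) = α₂·(d(βu)/(βu)). -/
/-!
Write `[c, a)` for the class of `c·(da/a)` in `H²(F)`; it is additive in `c` and in `a ∈ F^×`.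
Besides the defining relations `[c^p - c, a) = 0` there are two more: `[a, a) = 0`, since
`a·(da/a) = da`, and `[β γ^p, β) = 0`, since `β γ^p·(dβ/β) = γ^p dβ = d(γ^p β)`.

Given `α` and `β`, put `γ = α (β + 1) / β`, `v = α + γ^p - γ` and `x = β γ^p`. Then
`x - α = β v`, because `β γ = α β + α`. If `v ≠ 0`, then `u = β v` satisfies
`[x, u) = [u + α, u) = [α, u) = [α, β) + [α, v) = [α, β)`,
where `[α, v) = [v - (γ^p - γ), v) = 0`. As moreover `[x, β) = 0`, the choice `α₂ = x`,
`α₁ = α - x` works. If `v = 0`, then `α = -(γ^p - γ)`, so `[α, β) = 0` and one takes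
`α₁ = α`, `α₂ = 0`, `u = 1`.
-/

noncomputable section

/-- The subgroup of `Ω^1(F)` whose quotient defines `H²(F)`: it is generated by
`dΩ^0(F)` together with the image of the Artin–Schreier map, i.e. by all differentials
`dc` with `c ∈ F` and all elements `(c^p − c)·(da/a)` with `c ∈ F`, `a ∈ F^×`. -/
def hRel2 (F : Type*) [Field F] (p : ℕ) : AddSubgroup (KaehlerDifferential ℤ F) :=
  AddSubgroup.closure {ω | ∃ c : F, ω = absD F c} ⊔
    AddSubgroup.closure
      {ω | ∃ (c : F) (a : F), a ≠ 0 ∧ ω = (c ^ p - c) • a⁻¹ • absD F a}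

/-- `H²(F)`, the cokernel of the Artin–Schreier map `℘ : Ω^1(F) → Ω^1(F)/dΩ^0(F)`. -/
def H2 (F : Type*) [Field F] (p : ℕ) := KaehlerDifferential ℤ F ⧸ hRel2 F p

/-- The class of a `1`-form in `H²(F)`. -/
def h2Class (F : Type*) [Field F] (p : ℕ) (ω : KaehlerDifferential ℤ F) : H2 F p :=
  QuotientAddGroup.mk' (hRel2 F p) ω

theorem h2Class_eq_of_sub_mem {F : Type*} [Field F] {p : ℕ} {ω η : KaehlerDifferential ℤ F}
    (h : ω - η ∈ hRel2 F p) : h2Class F p ω = h2Class F p η :=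
  QuotientAddGroup.eq_iff_sub_mem.mpr h

theorem absD_mem_hRel2 {F : Type*} [Field F] (p : ℕ) (c : F) : absD F c ∈ hRel2 F p :=
  AddSubgroup.mem_sup_left (AddSubgroup.subset_closure ⟨c, rfl⟩)

theorem artinSchreier_mem_hRel2 {F : Type*} [Field F] (p : ℕ) (c : F) {a : F} (ha : a ≠ 0) :
    (c ^ p - c) • a⁻¹ • absD F a ∈ hRel2 F p :=
  AddSubgroup.mem_sup_right (AddSubgroup.subset_closure ⟨c, a, ha, rfl⟩)

theorem dlog_mul {F : Type*} [Field F] {a b : F} (ha : a ≠ 0) (hb : b ≠ 0) :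
    (a * b)⁻¹ • absD F (a * b) = a⁻¹ • absD F a + b⁻¹ • absD F b := by
  simp only [absD, Derivation.leibniz, smul_add, smul_smul]
  rw [add_comm]
  congr 2 <;> field_simp

theorem smul_dlog_self {F : Type*} [Field F] {a : F} (ha : a ≠ 0) :
    a • a⁻¹ • absD F a = absD F a := by
  rw [smul_smul, mul_inv_cancel₀ ha, one_smul]

/-- The form `β γ^p·(dβ/β)` is exact, since `p`-th powers are constants for `d`. -/
theorem mul_pow_smul_dlog {F : Type*} [Field F] (p : ℕ) [CharP F p] {β : F} (hβ : β ≠ 0)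
    (γ : F) : (β * γ ^ p) • β⁻¹ • absD F β = absD F (γ ^ p * β) := by
  have h0 : KaehlerDifferential.D ℤ F (γ ^ p) = 0 := by
    rw [Derivation.leibniz_pow, ← Nat.cast_smul_eq_nsmul F, CharP.cast_eq_zero, zero_smul]
  simp only [absD, Derivation.leibniz, h0, smul_zero, add_zero, smul_smul]
  congr 1
  field_simp

theorem statement3 (F : Type*) [Field F] (p : ℕ) [Fact p.Prime] [CharP F p]
    (α : F) (β : F) (hβ : β ≠ 0) :
    ∃ α₁ α₂ u : F, u ≠ 0 ∧ α = α₁ + α₂ ∧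
      h2Class F p (α • β⁻¹ • absD F β) = h2Class F p (α₁ • β⁻¹ • absD F β) ∧
      h2Class F p (α₁ • β⁻¹ • absD F β) =
        h2Class F p (α₂ • (β * u)⁻¹ • absD F (β * u)) := by
  obtain ⟨γ, hγ⟩ : ∃ γ : F, β * γ = α * β + α :=
    ⟨(α * β + α) / β, mul_div_cancel₀ _ hβ⟩
  obtain ⟨v, hv⟩ : ∃ v : F, v = α + γ ^ p - γ := ⟨_, rfl⟩
  by_cases hv0 : v = 0
  · refine ⟨α, 0, 1, one_ne_zero, (add_zero α).symm, rfl, h2Class_eq_of_sub_mem ?_⟩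
    have hα : α = -(γ ^ p - γ) := by linear_combination hv0 - hv
    rw [zero_smul, sub_zero, hα, neg_smul]
    exact neg_mem (artinSchreier_mem_hRel2 p γ hβ)
  · have hu0 : β * v ≠ 0 := mul_ne_zero hβ hv0
    have hx : (β * γ ^ p) • β⁻¹ • absD F β ∈ hRel2 F p := by
      rw [mul_pow_smul_dlog p hβ]
      exact absD_mem_hRel2 p _
    refine ⟨α - β * γ ^ p, β * γ ^ p, β * v, hu0, (sub_add_cancel _ _).symm,
      h2Class_eq_of_sub_mem ?_, h2Class_eq_of_sub_mem ?_⟩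
    · rw [sub_smul, sub_sub_cancel]
      exact hx
    · have hxu : β * γ ^ p = β * v + α := by linear_combination (-β) * hv + hγ
      have hαv : α = v - (γ ^ p - γ) := by linear_combination -hv
      have h1 : (β * γ ^ p) • (β * v)⁻¹ • absD F (β * v) =
          absD F (β * v) + α • β⁻¹ • absD F β
            + (absD F v - (γ ^ p - γ) • v⁻¹ • absD F v) := by
        have h2 : α • v⁻¹ • absD F v = absD F v - (γ ^ p - γ) • v⁻¹ • absD F v := by
          conv_lhs => rw [hαv, sub_smul, smul_dlog_self hv0]
        rw [hxu, add_smul, smul_dlog_self hu0, dlog_mul hβ hv0, smul_add, h2, add_assoc]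
      rw [dlog_mul hβ hu0, smul_add, h1, sub_smul]
      have h3 := sub_mem (sub_mem (sub_mem (artinSchreier_mem_hRel2 p γ hv0)
        (absD_mem_hRel2 p v)) (absD_mem_hRel2 p (β * v))) (add_mem hx hx)
      convert h3 using 1
      abel

end
end

section
/- Let F be a field of characteristic p > 0. If every Albert p-form over F has a non-trivial zero, then H⁴(F) = 0. -/
/-!
The class of `s dc/c ∧ dγ/γ ∧ dδ/δ` vanishes in `H⁴(F)` for all `s` and all nonzero `c`, `γ`, `δ`; as
these forms generate `Ω^3(F)`, the group `H⁴(F)` is zero.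

The input on norms is `smul_logDeriv_norm_mem`: if `N` is a nonzero norm from the field `F_α`, then
`α dN/N` lies in the subgroup `hOne` of relations of `H²(F)`. It is proved by applying the trace
`Ω^1(F_α) → Ω^1(F)` to `Φ ω - ω`, where `Φ` is the inverse Cartier operator (`exists_cartier`) and
`ω = θ dξ/ξ` with `θ ^ p - θ = α` and `N` the norm of `ξ`. Products of `hOne` with two logarithmic
differentials are relations of `H⁴(F)` (`tri_hOne`).

Given `s = α + β`, a zero of `A(α,β,γ,δ)` is a relation `u + γ A + δ B = 0` between norms `u`, `A`, `B`
from `F_s`, `F_α`, `F_β`. As `s du/u` is in `hOne`, this gives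
`s dc/c ∧ dlog (γ A) ∧ dlog (δ B) = 0` (`tri_of_add_eq_zero`). The terms with `dlog A` or `dlog B` drop
out if `α` and `β` are well chosen, which leaves the claim (`tri_eq_zero_of_albert`). For `p` odd the
choice `α = β = s / 2` works. For `p = 2` one takes `α = c * x`, `β = c * y` with `x + y = s / c` such
that `s dx/x` and `s dy/y` are in `hOne` (`tri_logD_eq_zero`): then `s dc/c` agrees modulo `hOne` with
both `s dβ/β` and `s dα/α`, and `α dA/A`, `β dB/B`, `dα`, `dβ` are all in `hOne`.
-/

/-!
STATEMENT 4 (Theorem `h4=0`):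
Let `F` be a field of characteristic `p > 0`.  If every Albert `p`-form over `F` has a
non-trivial zero, then `H⁴(F) = 0`.

For `a ∈ F`, `F_a = F[T]/(T^p − T − a)` is a degree-`p` étale `F`-algebra with norm map
`N_{F_a/F}` (the determinant of multiplication, Mathlib's `Algebra.norm`).  For
`α, β ∈ F` and `γ, δ ∈ F^×`, the Albert `p`-form `A(α,β,γ,δ)` is the map
`F_{α+β} ⊕ F_α ⊕ F_β → F`, `(x,y,z) ↦ N(x) + γ·N(y) + δ·N(z)`.

`H⁴(F)` is the cokernel of the Artin–Schreier map `℘ : Ω^3(F) → Ω^3(F)/dΩ^2(F)`,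
where `Ω^n(F) = ⋀^n Ω^1(F)` for the absolute Kähler differentials `Ω^1(F)`.  Since
`Ω^3(F)` is generated as an additive group by logarithmic differentials, `H⁴(F)` is the
quotient of `Ω^3(F)` by the subgroup generated by `dΩ^2(F)` (itself generated by the
`dc₁∧dc₂∧dc₃`) together with all `(c^p−c)·(da₁/a₁)∧(da₂/a₂)∧(da₃/a₃)`.
-/

noncomputable section

open Polynomial

/-! ### The inverse Cartier operator -/

/-- The universal property of `Ω^1(K)` for maps that are Leibniz after twisting the scalars by a ring
homomorphism `f`: such a map extends to an `f`-semilinear map on `Ω^1(K)`. -/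
theorem exists_semilinear_lift {K R Q : Type*} [CommRing K] [CommRing R] [AddCommGroup Q]
    [Module R Q] (f : K →+* R) (g : K →+ Q) (hg : ∀ a b, g (a * b) = f a • g b + f b • g a) :
    ∃ Φ : KaehlerDifferential ℤ K →+ Q,
      (∀ a, Φ (KaehlerDifferential.D ℤ K a) = g a) ∧ ∀ a ω, Φ (a • ω) = f a • Φ ω := by
  let _ : Module K Q := Module.compHom Q f
  let D : Derivation ℤ K Q := Derivation.mk' g.toIntLinearMap hg
  refine ⟨D.liftKaehlerDifferential.toAddMonoidHom, fun a => ?_, fun a ω => ?_⟩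
  · exact D.liftKaehlerDifferential_comp_D a
  · exact D.liftKaehlerDifferential.map_smul a ω

/-- The additive group `dK ⊆ Ω^1(K)` of exact 1-forms. -/
def exactForms (K : Type*) [Field K] : AddSubgroup (KaehlerDifferential ℤ K) :=
  (KaehlerDifferential.D ℤ K : K →ₗ[ℤ] KaehlerDifferential ℤ K).toAddMonoidHom.range

theorem mem_exactForms {K : Type*} [Field K] {ω : KaehlerDifferential ℤ K} :
    ω ∈ exactForms K ↔ ∃ κ, KaehlerDifferential.D ℤ K κ = ω := Iff.rfl

theorem D_pow_char {K : Type*} [Field K] (p : ℕ) [CharP K p] (a : K) :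
    KaehlerDifferential.D ℤ K (a ^ p) = 0 := by
  rw [Derivation.leibniz_pow, ← Nat.cast_smul_eq_nsmul K, CharP.cast_eq_zero, zero_smul]

theorem pow_smul_exactForms {K : Type*} [Field K] (p : ℕ) [CharP K p] (a : K)
    {ω : KaehlerDifferential ℤ K} (h : ω ∈ exactForms K) : a ^ p • ω ∈ exactForms K := by
  obtain ⟨κ, rfl⟩ := h
  refine ⟨a ^ p * κ, ?_⟩
  change KaehlerDifferential.D ℤ K (a ^ p * κ) = a ^ p • KaehlerDifferential.D ℤ K κ
  rw [Derivation.leibniz, D_pow_char, smul_zero, add_zero]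

theorem pow_smul_D_mem {K : Type*} [Field K] (p : ℕ) [Fact p.Prime] [CharP K p] (t : K) (i : ℕ)
    (hi : i + 1 < p) : t ^ i • KaehlerDifferential.D ℤ K t ∈ exactForms K := by
  have hne : ((i + 1 : ℕ) : K) ≠ 0 := by
    rw [Ne, CharP.cast_eq_zero_iff K p]
    exact Nat.not_dvd_of_pos_of_lt (Nat.succ_pos _) hi
  -- the inverse of `i + 1` modulo `p` is represented by an integer, which `d` treats as a constant
  obtain ⟨k, hk⟩ : ∃ k : ℕ, (k : K) * ((i + 1 : ℕ) : K) = 1 := by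
    refine ⟨((i + 1 : ℕ) : ZMod p)⁻¹.val, ?_⟩
    have h0 : ((i + 1 : ℕ) : ZMod p) ≠ 0 := by
      rw [Ne, CharP.cast_eq_zero_iff (ZMod p) p]
      exact Nat.not_dvd_of_pos_of_lt (Nat.succ_pos _) hi
    have h1 : ((((i + 1 : ℕ) : ZMod p)⁻¹.val * (i + 1) : ℕ) : ZMod p) = ((1 : ℕ) : ZMod p) := by
      rw [Nat.cast_mul, ZMod.natCast_val, ZMod.cast_id, inv_mul_cancel₀ h0, Nat.cast_one]
    rw [CharP.natCast_eq_natCast (ZMod p) p] at h1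
    have h2 := (CharP.natCast_eq_natCast K p).2 h1
    rwa [Nat.cast_mul, Nat.cast_one] at h2
  refine mem_exactForms.2 ⟨k • t ^ (i + 1), ?_⟩
  rw [map_nsmul, Derivation.leibniz_pow, ← Nat.cast_smul_eq_nsmul K k,
    ← Nat.cast_smul_eq_nsmul K (i + 1), smul_smul, hk, one_smul, Nat.add_sub_cancel]

/-- By the binomial theorem, the difference is a combination of forms `t ^ i dt` with `i < p - 1`, which
are exact because `i + 1` is invertible. -/
theorem succ_pow_smul_D {K : Type*} [Field K] (p : ℕ) [Fact p.Prime] [CharP K p] (t : K) :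
    (t + 1) ^ (p - 1) • KaehlerDifferential.D ℤ K t -
      t ^ (p - 1) • KaehlerDifferential.D ℤ K t ∈ exactForms K := by
  have hp : p.Prime := Fact.out
  rw [add_pow, Finset.sum_range_succ, add_smul]
  simp only [one_pow, mul_one, Nat.choose_self, Nat.cast_one]
  rw [add_sub_cancel_right, Finset.sum_smul]
  refine AddSubgroup.sum_mem _ fun i hi => ?_
  rw [mul_comm, mul_smul, Nat.cast_smul_eq_nsmul]
  have := hp.pos
  exact AddSubgroup.nsmul_mem _ (pow_smul_D_mem p t i (by have := Finset.mem_range.1 hi; omega)) _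

/-- The map `a ↦ a ^ (p - 1) da` satisfies a Leibniz rule twisted by Frobenius. -/
theorem cartier_mul {K : Type*} [Field K] (p : ℕ) [Fact p.Prime] [CharP K p] (a b : K) :
    (a * b) ^ (p - 1) • KaehlerDifferential.D ℤ K (a * b) =
      a ^ p • (b ^ (p - 1) • KaehlerDifferential.D ℤ K b) +
      b ^ p • (a ^ (p - 1) • KaehlerDifferential.D ℤ K a) := by
  have hp : p.Prime := Fact.out
  obtain ⟨m, rfl⟩ : ∃ m, p = m + 1 := ⟨p - 1, by have := hp.pos; omega⟩
  rw [Derivation.leibniz]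
  simp only [smul_add, smul_smul, Nat.add_sub_cancel]
  congr 2 <;> ring

/-- The map `a ↦ a ^ (p - 1) da` is additive modulo exact forms. After scaling by `b ^ p` this is the
case `b = 1`, which is `succ_pow_smul_D`. -/
theorem cartier_add {K : Type*} [Field K] (p : ℕ) [Fact p.Prime] [CharP K p] (a b : K) :
    (a + b) ^ (p - 1) • KaehlerDifferential.D ℤ K (a + b) -
      (a ^ (p - 1) • KaehlerDifferential.D ℤ K a + b ^ (p - 1) • KaehlerDifferential.D ℤ K b) ∈
      exactForms K := by
  have hp : p.Prime := Fact.out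
  have hp1 : p - 1 ≠ 0 := by have := hp.two_le; omega
  by_cases hb : b = 0
  · simp [hb, hp1]
  obtain ⟨t, rfl⟩ : ∃ t, a = b * t := ⟨a / b, by field_simp⟩
  have h1 : b * t + b = b * (t + 1) := by ring
  have h2 := pow_smul_exactForms p b (succ_pow_smul_D p t)
  rw [h1, cartier_mul, cartier_mul]
  convert h2 using 1
  have e : (t + 1) ^ p = t ^ p + 1 := by rw [add_pow_char, one_pow]
  rw [e, map_add, Derivation.map_one_eq_zero, add_zero, add_smul, one_smul,
    smul_sub]
  abel

/-- The inverse Cartier operator `Ω^1(K) → Ω^1(K)/dK`, which is Frobenius-semilinear and fixes the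
classes of logarithmic differentials. -/
theorem exists_cartier (K : Type*) [Field K] (p : ℕ) [Fact p.Prime] [CharP K p] :
    ∃ Φ : KaehlerDifferential ℤ K →+ KaehlerDifferential ℤ K ⧸ exactForms K,
      ∀ a x : K, x ≠ 0 → Φ (a • x⁻¹ • KaehlerDifferential.D ℤ K x) =
        QuotientAddGroup.mk (a ^ p • x⁻¹ • KaehlerDifferential.D ℤ K x) := by
  have hp : p.Prime := Fact.out
  let R := (frobenius K p).range
  -- exact forms are stable under multiplication by `p`-th powers
  let B : Submodule R (KaehlerDifferential ℤ K) :=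
    { exactForms K with
      smul_mem' := by
        rintro ⟨_, c, rfl⟩ ω hω
        exact pow_smul_exactForms p c hω }
  let g : K →+ KaehlerDifferential ℤ K ⧸ B :=
    { toFun := fun a => Submodule.Quotient.mk (a ^ (p - 1) • KaehlerDifferential.D ℤ K a)
      map_zero' := by simp
      map_add' := fun a b => by
        rw [← Submodule.Quotient.mk_add, Submodule.Quotient.eq]
        exact cartier_add p a b }
  obtain ⟨Φ, h1, h2⟩ := exists_semilinear_lift (frobenius K p).rangeRestrict g (fun a b => by
    change Submodule.Quotient.mk _ = _ 
    rw [cartier_mul]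
    rfl)
  have key : ∀ a x : K, x ≠ 0 → Φ (a • x⁻¹ • KaehlerDifferential.D ℤ K x) =
      Submodule.Quotient.mk (a ^ p • x⁻¹ • KaehlerDifferential.D ℤ K x) := fun a x hx => by
    have e1 : (frobenius K p).rangeRestrict (a * x⁻¹) • g x =
        (Submodule.Quotient.mk ((a * x⁻¹) ^ p • (x ^ (p - 1) • KaehlerDifferential.D ℤ K x)) :
          KaehlerDifferential ℤ K ⧸ B) := rfl
    rw [smul_smul, h2, h1, e1, smul_smul, smul_smul]
    congr 2
    obtain ⟨m, rfl⟩ : ∃ m, p = m + 1 := ⟨p - 1, by have := hp.pos; omega⟩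
    rw [Nat.add_sub_cancel]
    rw [mul_pow, inv_pow]
    field_simp
    ring
  exact ⟨Φ, key⟩

/-! ### Norms from Galois extensions and relations of `H²` -/

/-- The relations defining `H^2(F)`: the subgroup of `Ω^1(F)` generated by the exact forms and the
forms `(c ^ p - c) de/e`. -/
def hOne (F : Type*) [Field F] (p : ℕ) : AddSubgroup (KaehlerDifferential ℤ F) :=
  exactForms F ⊔ AddSubgroup.closure
    {ω | ∃ c e : F, e ≠ 0 ∧ ω = (c ^ p - c) • e⁻¹ • KaehlerDifferential.D ℤ F e}

theorem D_mem_hOne {F : Type*} [Field F] (p : ℕ) (a : F) :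
    KaehlerDifferential.D ℤ F a ∈ hOne F p :=
  (le_sup_left : _ ≤ hOne F p) ⟨a, rfl⟩

theorem artinSchreier_mem_hOne {F : Type*} [Field F] (p : ℕ) (c : F) {e : F} (he : e ≠ 0) :
    (c ^ p - c) • e⁻¹ • KaehlerDifferential.D ℤ F e ∈ hOne F p :=
  (le_sup_right : _ ≤ hOne F p) (AddSubgroup.subset_closure ⟨c, e, he, rfl⟩)

section Norm

variable {F K : Type*} [Field F] [Field K] [Algebra F K]

/-- A separable algebraic extension is formally étale, so `Ω^1(K) = K ⊗ Ω^1(F)`. -/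
theorem map_injective_of_isSeparable [Algebra.IsSeparable F K] :
    Function.Injective (KaehlerDifferential.map ℤ ℤ F K) := by
  have : Algebra.FormallyEtale F K := Algebra.FormallyEtale.of_isSeparable F K
  have h := KaehlerDifferential.isBaseChange_of_formallyEtale ℤ F K
  have h2 : Function.Injective (fun x : KaehlerDifferential ℤ F => (1 : K) ⊗ₜ[F] x) :=
    Module.FaithfullyFlat.tensorProduct_mk_injective (A := F) (B := K) _
  intro x y hxy
  apply h2
  apply h.equiv.injective
  simpa using hxy

/-- The semilinear action of the Galois group on `Ω^1(K)`. -/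
theorem gal_action : ∃ S : Gal(K/F) → KaehlerDifferential ℤ K →+ KaehlerDifferential ℤ K,
    (∀ σ a, S σ (KaehlerDifferential.D ℤ K a) = KaehlerDifferential.D ℤ K (σ a)) ∧
    ∀ σ a ω, S σ (a • ω) = σ a • S σ ω := by
  have : ∀ σ : Gal(K/F), ∃ Φ : KaehlerDifferential ℤ K →+ KaehlerDifferential ℤ K,
      (∀ a, Φ (KaehlerDifferential.D ℤ K a) = KaehlerDifferential.D ℤ K (σ a)) ∧
      ∀ a ω, Φ (a • ω) = σ a • Φ ω := fun σ =>
    exists_semilinear_lift (σ : K →+* K)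
      (((KaehlerDifferential.D ℤ K : K →ₗ[ℤ] KaehlerDifferential ℤ K).toAddMonoidHom).comp
        ((σ : K →+* K) : K →+ K)) (fun a b => by
          change KaehlerDifferential.D ℤ K (σ (a * b)) =
            σ a • KaehlerDifferential.D ℤ K (σ b) + σ b • KaehlerDifferential.D ℤ K (σ a)
          rw [map_mul, Derivation.leibniz])
  choose S h1 h2 using this
  exact ⟨S, h1, h2⟩

/-- The logarithmic derivative turns products into sums. -/
theorem smul_D_prod {ι : Type*} (s : Finset ι) (f : ι → K) (hf : ∀ i, f i ≠ 0) :
    (∏ i ∈ s, f i)⁻¹ • KaehlerDifferential.D ℤ K (∏ i ∈ s, f i) =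
      ∑ i ∈ s, (f i)⁻¹ • KaehlerDifferential.D ℤ K (f i) := by
  classical
  induction s using Finset.induction_on with
  | empty => simp
  | insert i s hi ih =>
    have h0 : ∏ i ∈ s, f i ≠ 0 := Finset.prod_ne_zero_iff.2 fun i _ => hf i
    have hi0 := hf i
    rw [Finset.prod_insert hi, Finset.sum_insert hi, ← ih, Derivation.leibniz, smul_add, smul_smul,
      smul_smul, add_comm]
    congr 2 <;> field_simp

/-- If `α = θ ^ p - θ` in the Galois extension `K`, then `α dN/N` vanishes in `H^2(F)` for every
nonzero norm `N` from `K`. With `Φ` the inverse Cartier operator of `K` and `T` the trace `Ω^1(K) → Ω^1(F)`, the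
form `T (Φ ω - ω)` is always a relation; for `ω = θ dξ/ξ` it is `T (α dξ/ξ) = α dN/N`,
where `N` is the norm of `ξ`. -/
theorem smul_logDeriv_norm_mem [FiniteDimensional F K] [IsGalois F K] (p : ℕ) [Fact p.Prime]
    [CharP F p] (θ : K) (α : F) (hθ : θ ^ p - θ = algebraMap F K α) (ξ : K) (hξ : ξ ≠ 0) :
    α • (Algebra.norm F ξ)⁻¹ • KaehlerDifferential.D ℤ F (Algebra.norm F ξ) ∈ hOne F p := by
  have : CharP K p := charP_of_injective_algebraMap (algebraMap F K).injective p
  obtain ⟨Φ, hΦ⟩ := exists_cartier K p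
  obtain ⟨S, hSD, hS⟩ := gal_action (F := F) (K := K)
  let ι := KaehlerDifferential.map ℤ ℤ F K
  have hιD : ∀ a, ι (KaehlerDifferential.D ℤ F a) = KaehlerDifferential.D ℤ K (algebraMap F K a) :=
    fun a => KaehlerDifferential.map_D ..
  let T : KaehlerDifferential ℤ K →+ KaehlerDifferential ℤ K := ∑ σ : Gal(K/F), S σ
  have hT : ∀ ω, T ω = ∑ σ : Gal(K/F), S σ ω := fun ω => AddMonoidHom.finsetSum_apply ..
  have hSι : ∀ σ ω, S σ (ι ω) = ι ω := by
    intro σ ω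
    have hω : ω ∈ Submodule.span F (Set.range (KaehlerDifferential.D ℤ F)) := by
      rw [KaehlerDifferential.span_range_derivation]; trivial
    induction hω using Submodule.span_induction with
    | mem x h =>
      obtain ⟨a, rfl⟩ := h
      rw [hιD, hSD, AlgEquiv.commutes]
    | zero => simp
    | add x y _ _ hx hy => rw [map_add, map_add, hx, hy]
    | smul a x _ hx =>
      rw [map_smul, ← algebraMap_smul K a, hS, hx, AlgEquiv.commutes]
  have hTι : ∀ b ω, T (b • ι ω) = ι (Algebra.trace F K b • ω) := by
    intro b ω
    rw [hT, map_smul, ← algebraMap_smul K (Algebra.trace F K b), trace_eq_sum_automorphisms,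
      Finset.sum_smul]
    exact Finset.sum_congr rfl fun σ _ => by rw [hS, hSι]
  have hTD : ∀ κ, T (KaehlerDifferential.D ℤ K κ) =
      ι (KaehlerDifferential.D ℤ F (Algebra.trace F K κ)) := by
    intro κ
    rw [hT, hιD, trace_eq_sum_automorphisms, map_sum]
    exact Finset.sum_congr rfl fun σ _ => hSD σ κ
  let H : AddSubgroup (KaehlerDifferential ℤ K) := (hOne F p).map ι.toAddMonoidHom
  have hH : ∀ ω ∈ hOne F p, ι ω ∈ H := fun ω h => ⟨ω, h, rfl⟩
  -- `P ω`: the trace of `Φ ω - ω` is a relation over `F`, whichever form `ψ` represents `Φ ω`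
  let P : KaehlerDifferential ℤ K → Prop := fun ω =>
    ∀ ψ, QuotientAddGroup.mk ψ = Φ ω → T ψ - T ω ∈ H
  have hP0 : P 0 := by
    intro ψ h
    rw [map_zero, QuotientAddGroup.eq_zero_iff] at h
    obtain ⟨κ, rfl⟩ := h
    rw [map_zero, sub_zero]
    change T (KaehlerDifferential.D ℤ K κ) ∈ H
    rw [hTD]
    exact hH _ (D_mem_hOne p _)
  have hPadd : ∀ ω₁ ω₂, P ω₁ → P ω₂ → P (ω₁ + ω₂) := by
    intro ω₁ ω₂ h1 h2 ψ h
    obtain ⟨ψ₁, e1⟩ := QuotientAddGroup.mk_surjective (Φ ω₁)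
    have e2 : QuotientAddGroup.mk (ψ - ψ₁) = Φ ω₂ := by
      rw [QuotientAddGroup.mk_sub, h, e1, map_add]; abel
    have := H.add_mem (h1 ψ₁ e1) (h2 _ e2)
    convert this using 1
    simp only [map_add, map_sub]
    abel
  have hPgen : ∀ (ω : KaehlerDifferential ℤ F) (b : K), P (b • ι ω) := by
    intro ω
    have hω : ω ∈ Submodule.span F (Set.range (KaehlerDifferential.D ℤ F)) := by
      rw [KaehlerDifferential.span_range_derivation]; trivial
    induction hω using Submodule.span_induction with
    | mem x h =>
      obtain ⟨e, rfl⟩ := h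
      intro b
      by_cases he : e = 0
      · simpa [he] using hP0
      have he' : algebraMap F K e ≠ 0 := by simpa using he
      have key : ∀ a : K, P (a • (algebraMap F K e)⁻¹ •
          KaehlerDifferential.D ℤ K (algebraMap F K e)) := by
        intro a ψ h
        rw [hΦ a _ he', ← sub_eq_zero, ← QuotientAddGroup.mk_sub,
          QuotientAddGroup.eq_zero_iff] at h
        obtain ⟨κ, hκ⟩ := h
        have hι : (algebraMap F K e)⁻¹ • KaehlerDifferential.D ℤ K (algebraMap F K e) =
            ι (e⁻¹ • KaehlerDifferential.D ℤ F e) := by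
          rw [map_smul, hιD, ← algebraMap_smul K e⁻¹, map_inv₀]
        have hψ : ψ = a ^ p • ι (e⁻¹ • KaehlerDifferential.D ℤ F e) +
            KaehlerDifferential.D ℤ K κ := by
          rw [← hι]
          change KaehlerDifferential.D ℤ K κ = _ at hκ
          rw [hκ]; abel
        have htr : Algebra.trace F K (a ^ p) = Algebra.trace F K a ^ p := by
          apply (algebraMap F K).injective
          rw [trace_eq_sum_automorphisms, map_pow (algebraMap F K), trace_eq_sum_automorphisms,
            sum_pow_char]
          simp
        rw [hψ, hι, map_add, hTι, hTι, hTD, htr, ← map_add, ← map_sub]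
        apply hH
        rw [add_sub_right_comm, ← sub_smul]
        exact (hOne F p).add_mem (artinSchreier_mem_hOne p _ he) (D_mem_hOne p _)
      have := key (b * algebraMap F K e)
      rwa [smul_smul, mul_assoc, mul_inv_cancel₀ he', mul_one, ← hιD] at this
    | zero => simpa using hP0
    | add x y _ _ hx hy =>
      intro b
      rw [map_add, smul_add]
      exact hPadd _ _ (hx b) (hy b)
    | smul a x _ hx =>
      intro b
      rw [map_smul, ← algebraMap_smul K a, smul_smul]
      exact hx _
  have hP : ∀ ω, P ω := by
    have : Algebra.FormallyEtale F K := Algebra.FormallyEtale.of_isSeparable F K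
    have hb := KaehlerDifferential.isBaseChange_of_formallyEtale ℤ F K
    have hP' : ∀ (ω : KaehlerDifferential ℤ K) (b : K), P (b • ω) := fun ω =>
      hb.inductionOn ω (fun ω => ∀ b : K, P (b • ω)) (fun b => by simpa using hP0)
        (fun ω b => hPgen ω b)
        (fun a ω h b => by rw [smul_smul]; exact h _)
        (fun ω₁ ω₂ h₁ h₂ b => by rw [smul_add]; exact hPadd _ _ (h₁ b) (h₂ b))
    exact fun ω => by simpa using hP' ω 1
  have hmain := hP (θ • ξ⁻¹ • KaehlerDifferential.D ℤ K ξ)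
    (θ ^ p • ξ⁻¹ • KaehlerDifferential.D ℤ K ξ) (hΦ θ ξ hξ).symm
  rw [← map_sub, ← sub_smul, hθ] at hmain
  have hN : T (algebraMap F K α • ξ⁻¹ • KaehlerDifferential.D ℤ K ξ) =
      ι (α • (Algebra.norm F ξ)⁻¹ • KaehlerDifferential.D ℤ F (Algebra.norm F ξ)) := by
    rw [map_smul ι, map_smul ι, hιD, ← algebraMap_smul K α, ← algebraMap_smul K (Algebra.norm F ξ)⁻¹,
      map_inv₀, Algebra.norm_eq_prod_automorphisms,
      smul_D_prod _ _ (fun σ => by simpa using hξ), hT, Finset.smul_sum]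
    exact Finset.sum_congr rfl fun σ _ => by rw [hS, hS, hSD, AlgEquiv.commutes, map_inv₀]
  rw [hN] at hmain
  obtain ⟨ω, hω, e⟩ := hmain
  rwa [← map_injective_of_isSeparable (F := F) (K := K) e]

end Norm

/-! ### Artin–Schreier extensions -/

section ArtinSchreier

variable {F : Type*} [Field F]

theorem artinSchreier_monic_natDegree (R : Type*) [CommRing R] [Nontrivial R] (p : ℕ)
    (hp : 1 < p) (a : R) :
    (X ^ p - X - C a : R[X]).Monic ∧ (X ^ p - X - C a : R[X]).natDegree = p := by
  have hd : (X + C a : R[X]).degree < p := by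
    rw [degree_X_add_C]; exact_mod_cast hp
  rw [sub_sub]
  exact ⟨monic_X_pow_sub hd, natDegree_eq_of_degree_eq_some (by
    rw [degree_sub_eq_left_of_degree_lt (by simpa using hd), degree_X_pow])⟩

/-- If `g` is a factor of `X ^ p - X - a` of degree `n` with `0 < n ≤ p / 2`, then summing
`ρ ^ p - ρ = a` over the roots `ρ` of `g` shows that `c ^ p - c = n * a`, where `c ∈ F` is the sum of
these roots. Then `c / n` contradicts the hypothesis. -/
theorem artinSchreier_irreducible {p : ℕ} [Fact p.Prime] [CharP F p] (a : F)
    (ha : ∀ c : F, c ^ p - c ≠ a) : Irreducible (X ^ p - X - C a : F[X]) := by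
  have hp : p.Prime := Fact.out
  obtain ⟨hm, hd⟩ := artinSchreier_monic_natDegree F p hp.one_lt a
  have h1 : (X ^ p - X - C a : F[X]) ≠ 1 := fun h => by
    rw [h, natDegree_one] at hd; exact hp.ne_zero hd.symm
  rw [hm.irreducible_iff_natDegree']
  refine ⟨h1, fun h g _ hg hgh hmem => ?_⟩
  rw [hd, Finset.mem_Ioc] at hmem
  let E := AlgebraicClosure F
  have : CharP E p := charP_of_injective_algebraMap (algebraMap F E).injective p
  have hs : (g.map (algebraMap F E)).Splits := IsAlgClosed.splits _
  have hroot : ∀ ρ ∈ (g.map (algebraMap F E)).roots, ρ ^ p - ρ = algebraMap F E a := by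
    intro ρ hρ
    have h0 := (mem_roots'.1 hρ).2
    have : ((h * g).map (algebraMap F E)).eval ρ = 0 := by
      rw [Polynomial.map_mul, eval_mul, h0.eq_zero, mul_zero]
    rw [hgh] at this
    simpa [sub_eq_zero] using this
  have hsum := hs.nextCoeff_eq_neg_sum_roots_of_monic (hg.map (algebraMap F E))
  rw [nextCoeff_map_eq] at hsum
  have hc : (-g.nextCoeff) ^ p - (-g.nextCoeff) = (g.natDegree : F) * a := by
    apply (algebraMap F E).injective
    rw [map_sub, map_pow, map_neg, hsum, neg_neg, multiset_sum_pow_char]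
    nth_rewrite 2 [← Multiset.map_id (g.map (algebraMap F E)).roots]
    rw [← Multiset.sum_map_sub, Multiset.map_congr rfl (f := fun i => i ^ p - id i)
      (g := fun _ => algebraMap F E a) hroot,
      Multiset.map_const', Multiset.sum_replicate, splits_iff_card_roots.1 hs, natDegree_map]
    simp
  have hn : (g.natDegree : F) ≠ 0 := by
    rw [Ne, CharP.cast_eq_zero_iff F p]
    exact Nat.not_dvd_of_pos_of_lt hmem.1 (by have := hp.pos; omega)
  have hnp : (g.natDegree : F) ^ p = g.natDegree := by
    rw [← frobenius_def, map_natCast]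
  apply ha (-g.nextCoeff / g.natDegree)
  rw [div_pow, hnp, ← sub_div, hc, mul_div_cancel_left₀ _ hn]

/-- The roots of `X ^ p - X - a` are `θ + i` with `i ∈ 𝔽_p`, where `θ` is the class of `X`. -/
theorem artinSchreier_isGalois {p : ℕ} [Fact p.Prime] [CharP F p] (a : F)
    [Fact (Irreducible (X ^ p - X - C a : F[X]))] :
    IsGalois F (AdjoinRoot (X ^ p - X - C a : F[X])) := by
  have hp : p.Prime := Fact.out
  let K := AdjoinRoot (X ^ p - X - C a : F[X])
  have : CharP K p := charP_of_injective_algebraMap (algebraMap F K).injective p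
  let θ : K := AdjoinRoot.root _
  have hθ : θ ^ p - θ - algebraMap F K a = 0 := by
    have := AdjoinRoot.eval₂_root (X ^ p - X - C a : F[X])
    simp only [eval₂_sub, eval₂_X_pow, eval₂_X, eval₂_C] at this
    exact this
  have hmap : (X ^ p - X - C a : F[X]).map (algebraMap F K) = X ^ p - X - C (algebraMap F K a) := by
    simp
  obtain ⟨hm, hd⟩ := artinSchreier_monic_natDegree K p hp.one_lt (algebraMap F K a)
  have hroots : ∀ i : ZMod p, θ + ZMod.castHom (dvd_refl p) K i ∈
      ((X ^ p - X - C a : F[X]).map (algebraMap F K)).roots := by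
    intro i
    rw [hmap, mem_roots hm.ne_zero, IsRoot.def]
    simp only [eval_sub, eval_pow, eval_X, eval_C]
    rw [add_pow_char, ← map_pow, ZMod.pow_card]
    linear_combination hθ
  have hsplit : ((X ^ p - X - C a : F[X]).map (algebraMap F K)).Splits := by
    classical
    rw [splits_iff_card_roots]
    refine le_antisymm (card_roots' _) ?_
    rw [hmap, hd]
    calc p = (Finset.univ.image fun i : ZMod p => θ + ZMod.castHom (dvd_refl p) K i).card := by
          rw [Finset.card_image_of_injective, Finset.card_univ, ZMod.card]
          exact fun i j hij => RingHom.injective _ (add_left_cancel hij)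
      _ ≤ (X ^ p - X - C (algebraMap F K a)).roots.toFinset.card := by
          refine Finset.card_le_card fun x hx => ?_
          obtain ⟨i, -, rfl⟩ := Finset.mem_image.1 hx
          exact Multiset.mem_toFinset.2 (hmap ▸ hroots i)
      _ ≤ _ := Multiset.toFinset_card_le _
  have : IsSplittingField F K (X ^ p - X - C a : F[X]) := by
    refine ⟨hsplit, ?_⟩
    rw [eq_top_iff, ← AdjoinRoot.adjoinRoot_eq_top]
    refine Algebra.adjoin_mono (Set.singleton_subset_iff.2 ?_)
    rw [mem_rootSet']
    exact ⟨hmap ▸ hm.ne_zero, by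
      have := AdjoinRoot.eval₂_root (X ^ p - X - C a : F[X])
      rwa [← AdjoinRoot.algebraMap_eq] at this⟩
  refine IsGalois.of_separable_splitting_field (p := (X ^ p - X - C a : F[X])) ?_
  rw [Polynomial.separable_def]
  have : derivative (X ^ p - X - C a : F[X]) = -1 := by
    rw [derivative_sub, derivative_sub, derivative_X_pow, CharP.cast_eq_zero]; simp
  rw [this]
  exact isCoprime_one_right.neg_right

/-- The norm of a nonzero element of the field `F_a` is nonzero, and if `N` is this norm then `a dN/N` is
a relation of `H^2(F)`. -/
theorem smul_logDeriv_norm_adjoinRoot {p : ℕ} [Fact p.Prime] [CharP F p] (a : F)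
    (ha : ∀ c : F, c ^ p - c ≠ a) (x : AdjoinRoot (X ^ p - X - C a : F[X])) (hx : x ≠ 0) :
    Algebra.norm F x ≠ 0 ∧ a • (Algebra.norm F x)⁻¹ •
      KaehlerDifferential.D ℤ F (Algebra.norm F x) ∈ hOne F p := by
  have : Fact (Irreducible (X ^ p - X - C a : F[X])) := ⟨artinSchreier_irreducible a ha⟩
  have := artinSchreier_isGalois (p := p) a
  have : FiniteDimensional F (AdjoinRoot (X ^ p - X - C a : F[X])) :=
    (AdjoinRoot.powerBasis (Fact.out : Irreducible (X ^ p - X - C a : F[X])).ne_zero).finite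
  refine ⟨Algebra.norm_ne_zero_iff.2 hx, ?_⟩
  refine smul_logDeriv_norm_mem p (AdjoinRoot.root _) a ?_ x hx
  have := AdjoinRoot.eval₂_root (X ^ p - X - C a : F[X])
  simp only [eval₂_sub, eval₂_X_pow, eval₂_X, eval₂_C] at this
  exact sub_eq_zero.1 this

end ArtinSchreier

/-! ### Wedge products of three 1-forms in `H⁴` -/

section Wedge

variable {F : Type*} [Field F] (p : ℕ)

/-- The logarithmic differential `da/a`, with the junk value `0` at `a = 0`. -/
def logD (a : F) : KaehlerDifferential ℤ F := a⁻¹ • KaehlerDifferential.D ℤ F a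

theorem smul_logD {a : F} (ha : a ≠ 0) : a • logD a = KaehlerDifferential.D ℤ F a := by
  rw [logD, smul_smul, mul_inv_cancel₀ ha, one_smul]

theorem logD_mul {a b : F} (ha : a ≠ 0) (hb : b ≠ 0) : logD (a * b) = logD a + logD b := by
  simp only [logD, Derivation.leibniz, smul_add, smul_smul]
  rw [add_comm]
  congr 2 <;> field_simp

theorem logD_neg (a : F) : logD (-a) = logD a := by
  simp [logD]

/-- The class of `x ∧ y ∧ z` in `H^4(F)`, written with the quotient unfolded so that its group
structure is available. -/
def tri (x y z : KaehlerDifferential ℤ F) : (⋀[F]^3 (KaehlerDifferential ℤ F)) ⧸ hRel F p 3 :=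
  QuotientAddGroup.mk (wedge F 3 ![x, y, z])

theorem tri_eq_zero {x y z : KaehlerDifferential ℤ F} :
    tri p x y z = 0 ↔ wedge F 3 ![x, y, z] ∈ hRel F p 3 :=
  QuotientAddGroup.eq_zero_iff _

theorem wedge_eq (v : Fin 3 → KaehlerDifferential ℤ F) :
    wedge F 3 v = exteriorPower.ιMulti F 3 v := rfl

theorem update_cons₀ {M : Type*} (w x y z : M) :
    Function.update ![x, y, z] 0 w = ![w, y, z] := by
  ext i; fin_cases i <;> rfl

theorem update_cons₁ {M : Type*} (w x y z : M) :
    Function.update ![x, y, z] 1 w = ![x, w, z] := by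
  ext i; fin_cases i <;> rfl

theorem tri_add_left (x x' y z : KaehlerDifferential ℤ F) :
    tri p (x + x') y z = tri p x y z + tri p x' y z := by
  simp only [tri, wedge_eq, ← QuotientAddGroup.mk_add]
  congr 1
  simpa only [update_cons₀] using (exteriorPower.ιMulti F 3).map_update_add ![x, y, z] 0 x x'

theorem tri_zero_left (y z : KaehlerDifferential ℤ F) : tri p 0 y z = 0 := by
  simpa using tri_add_left p 0 0 y z

theorem wedge_smul_left (a : F) (x y z : KaehlerDifferential ℤ F) :
    wedge F 3 ![a • x, y, z] = a • wedge F 3 ![x, y, z] := by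
  simpa only [wedge_eq, update_cons₀, update_cons₁] using
    (exteriorPower.ιMulti F 3).map_update_smul ![x, y, z] 0 a x

theorem wedge_smul_mid (a : F) (x y z : KaehlerDifferential ℤ F) :
    wedge F 3 ![x, a • y, z] = a • wedge F 3 ![x, y, z] := by
  simpa only [wedge_eq, update_cons₀, update_cons₁] using
    (exteriorPower.ιMulti F 3).map_update_smul ![x, y, z] 1 a y

theorem tri_swap_left (x y z : KaehlerDifferential ℤ F) : tri p y x z = -tri p x y z := by
  simp only [tri, wedge_eq, ← QuotientAddGroup.mk_neg]
  congr 1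
  rw [← (exteriorPower.ιMulti F 3).map_swap ![x, y, z] (show (0 : Fin 3) ≠ 1 by decide)]
  congr 1
  ext i
  fin_cases i <;> rfl

theorem tri_swap_right (x y z : KaehlerDifferential ℤ F) : tri p x z y = -tri p x y z := by
  simp only [tri, wedge_eq, ← QuotientAddGroup.mk_neg]
  congr 1
  rw [← (exteriorPower.ιMulti F 3).map_swap ![x, y, z] (show (1 : Fin 3) ≠ 2 by decide)]
  congr 1
  ext i
  fin_cases i <;> rfl

theorem tri_self (x y : KaehlerDifferential ℤ F) : tri p x y y = 0 := by
  rw [tri, wedge_eq, (exteriorPower.ιMulti F 3).map_eq_zero_of_eq ![x, y, y]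
    (i := 1) (j := 2) rfl (by decide)]
  rfl

theorem tri_smul_left (a : F) (x y z : KaehlerDifferential ℤ F) :
    tri p (a • x) y z = tri p x (a • y) z := by
  rw [tri, tri, wedge_smul_left, wedge_smul_mid]

theorem tri_smul_mid (a : F) (x y z : KaehlerDifferential ℤ F) :
    tri p x (a • y) z = tri p x y (a • z) := by
  rw [← tri_smul_left, tri_swap_right p (a • x) z y, tri_smul_left, tri_swap_right p x y,
    neg_neg]

theorem tri_smul_right (a : F) (x y z : KaehlerDifferential ℤ F) :
    tri p (a • x) y z = tri p x y (a • z) := by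
  rw [tri_smul_left, tri_smul_mid]

theorem tri_add_mid (x y y' z : KaehlerDifferential ℤ F) :
    tri p x (y + y') z = tri p x y z + tri p x y' z := by
  rw [tri_swap_left, tri_add_left, neg_add, ← tri_swap_left, ← tri_swap_left]

theorem tri_add_right (x y z z' : KaehlerDifferential ℤ F) :
    tri p x y (z + z') = tri p x y z + tri p x y z' := by
  rw [tri_swap_right, tri_add_mid, neg_add, ← tri_swap_right, ← tri_swap_right]

theorem tri_self' (a : F) (x y : KaehlerDifferential ℤ F) : tri p x (a • y) y = 0 := by
  rw [← tri_smul_left, tri_self]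

theorem tri_D (a b c : F) : tri p (KaehlerDifferential.D ℤ F a) (KaehlerDifferential.D ℤ F b)
    (KaehlerDifferential.D ℤ F c) = 0 := by
  rw [tri_eq_zero]
  refine (le_sup_left : _ ≤ hRel F p 3) (AddSubgroup.subset_closure ⟨![a, b, c], ?_⟩)
  congr 1
  ext i
  fin_cases i <;> rfl

theorem tri_artinSchreier (c : F) {a₀ a₁ a₂ : F} (h₀ : a₀ ≠ 0) (h₁ : a₁ ≠ 0) (h₂ : a₂ ≠ 0) :
    tri p ((c ^ p - c) • logD a₀) (logD a₁) (logD a₂) = 0 := by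
  rw [tri_eq_zero, wedge_smul_left]
  refine (le_sup_right : _ ≤ hRel F p 3) (AddSubgroup.subset_closure ⟨c, ![a₀, a₁, a₂], ?_, ?_⟩)
  · intro j
    fin_cases j <;> assumption
  · rw [logForm]
    congr 2
    ext i
    fin_cases i <;> rfl

/-- Wedging with two logarithmic differentials maps the relations of `H^2(F)` to those of `H^4(F)`. For
an exact form `dκ` one writes `κ = κ' * x * y`: then `dκ ∧ dx/x ∧ dy/y = dκ' ∧ dx ∧ dy`. -/
theorem tri_hOne {h : KaehlerDifferential ℤ F} (hh : h ∈ hOne F p) {x y : F} (hx : x ≠ 0)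
    (hy : y ≠ 0) : tri p h (logD x) (logD y) = 0 := by
  let f : KaehlerDifferential ℤ F →+ (⋀[F]^3 (KaehlerDifferential ℤ F)) ⧸ hRel F p 3 :=
    AddMonoidHom.mk' (fun h => tri p h (logD x) (logD y)) fun a b => tri_add_left p a b _ _
  have hle : hOne F p ≤ f.ker := by
    refine sup_le ?_ ((AddSubgroup.closure_le _).2 ?_)
    · rintro _ ⟨κ, rfl⟩
      change tri p (KaehlerDifferential.D ℤ F κ) (logD x) (logD y) = 0
      obtain ⟨κ', rfl⟩ : ∃ κ', κ = κ' * (x * y) := ⟨κ / (x * y), by field_simp⟩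
      have e : KaehlerDifferential.D ℤ F (κ' * (x * y)) = (κ' * x * y) • logD x +
          (κ' * x * y) • logD y + (x * y) • KaehlerDifferential.D ℤ F κ' := by
        rw [Derivation.leibniz, Derivation.leibniz, ← smul_logD hx, ← smul_logD hy]
        module
      have e1 : tri p ((κ' * x * y) • logD x) (logD x) (logD y) = 0 := by
        rw [tri_smul_right, tri_swap_right, tri_swap_left, neg_neg, tri_self]
      have e2 : tri p ((κ' * x * y) • logD y) (logD x) (logD y) = 0 := by
        rw [tri_swap_left, tri_self', neg_zero]
      have e3 : tri p ((x * y) • KaehlerDifferential.D ℤ F κ') (logD x) (logD y) = 0 := by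
        rw [mul_smul, tri_smul_left, tri_smul_right, smul_logD hx, smul_logD hy, tri_D]
      rw [e, tri_add_left, tri_add_left, e1, e2, e3, add_zero, add_zero]
    · rintro _ ⟨c, e, he, rfl⟩
      exact tri_artinSchreier p c he hx hy
  exact hle hh

theorem tri_hOne_mid {h : KaehlerDifferential ℤ F} (hh : h ∈ hOne F p) {x y : F} (hx : x ≠ 0)
    (hy : y ≠ 0) : tri p (logD x) h (logD y) = 0 := by
  rw [tri_swap_left, tri_hOne p hh hx hy, neg_zero]

theorem tri_hOne_right {h : KaehlerDifferential ℤ F} (hh : h ∈ hOne F p) {x y : F} (hx : x ≠ 0)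
    (hy : y ≠ 0) : tri p (logD x) (logD y) h = 0 := by
  rw [tri_swap_right, tri_hOne_mid p hh hx hy, neg_zero]

end Wedge

/-! ### Zeros of Albert forms and vanishing of symbols -/

section Albert

variable {F : Type*} [Field F] (p : ℕ)

/-- If `u + v + w = 0`, then `dv/v ∧ dw/w = du/u ∧ dw/w + dv/v ∧ du/u`, and both terms on the right are
killed by `s` when `s du/u` is a relation. -/
theorem tri_of_add_eq_zero {s c u v w : F} (hc : c ≠ 0) (hu : u ≠ 0) (hv : v ≠ 0) (hw : w ≠ 0)
    (h : u + v + w = 0) (hs : s • logD u ∈ hOne F p) :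
    tri p (s • logD c) (logD v) (logD w) = 0 := by
  have hL : logD u = (-v / u) • logD v + (-w / u) • logD w := by
    have h1 : u • logD u = -(v • logD v) - w • logD w := by
      rw [smul_logD hu, smul_logD hv, smul_logD hw, (by linear_combination h : u = -v - w)]
      simp
    rw [← one_smul F (logD u), ← inv_mul_cancel₀ hu, mul_smul, h1, smul_sub, smul_neg, smul_smul,
      smul_smul, div_eq_inv_mul, div_eq_inv_mul]
    module
  have h1 : (-v / u) + (-w / u) = 1 := by
    field_simp
    linear_combination -h
  have e1 : tri p (s • logD c) ((-v / u) • logD v) (logD w) = 0 := by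
    have := tri_hOne_mid p hs hc hw
    rwa [← tri_smul_left, hL, tri_add_mid, tri_self', add_zero] at this
  have e2 : tri p (s • logD c) ((-w / u) • logD v) (logD w) = 0 := by
    have := tri_hOne_right p hs hc hv
    rwa [← tri_smul_right, hL, tri_add_right, ← tri_smul_mid, tri_self', zero_add,
      ← tri_smul_mid] at this
  rw [← one_smul F (logD v), ← h1, add_smul, tri_add_mid, e1, e2, add_zero]

variable [Fact p.Prime] [CharP F p]

/-- A zero of the Albert form `A(α,β,γ,δ)` makes the class of `s dc/c ∧ dγ/γ ∧ dδ/δ` vanish, provided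
that the norms `A` from `F_α` and `B` from `F_β` contribute nothing; the hypotheses `hA` and `hB`
express this through the only property of norms that is needed. -/
theorem tri_eq_zero_of_albert
    (halbert : ∀ (α β γ δ : F), γ ≠ 0 → δ ≠ 0 →
      ∃ (x : AdjoinRoot (X ^ p - X - C (α + β) : F[X]))
        (y : AdjoinRoot (X ^ p - X - C α : F[X]))
        (z : AdjoinRoot (X ^ p - X - C β : F[X])),
        ¬(x = 0 ∧ y = 0 ∧ z = 0) ∧
          Algebra.norm F x + γ * Algebra.norm F y + δ * Algebra.norm F z = 0)
    {s c γ δ : F} (α β : F) (hs : α + β = s) (hc : c ≠ 0) (hγ : γ ≠ 0) (hδ : δ ≠ 0)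
    (hA : ∀ A : F, A ≠ 0 → α • logD A ∈ hOne F p → ∀ e : F, e ≠ 0 →
      tri p (s • logD c) (logD A) (logD e) = 0)
    (hB : ∀ B : F, B ≠ 0 → β • logD B ∈ hOne F p → ∀ e : F, e ≠ 0 →
      tri p (s • logD c) (logD B) (logD e) = 0) :
    tri p (s • logD c) (logD γ) (logD δ) = 0 := by
  subst hs
  -- if one of the three algebras is split, no zero of the Albert form is needed
  by_cases h1 : ∃ a, a ^ p - a = α + β
  · obtain ⟨a, ha⟩ := h1
    exact ha ▸ tri_artinSchreier p a hc hγ hδ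
  by_cases h2 : ∃ a, a ^ p - a = α
  · obtain ⟨a, rfl⟩ := h2
    exact hA γ hγ (artinSchreier_mem_hOne p a hγ) δ hδ
  by_cases h3 : ∃ a, a ^ p - a = β
  · obtain ⟨a, rfl⟩ := h3
    rw [tri_swap_right, hB δ hδ (artinSchreier_mem_hOne p a hδ) γ hγ, neg_zero]
  push Not at h1 h2 h3
  have : Fact (Irreducible (X ^ p - X - C (α + β) : F[X])) := ⟨artinSchreier_irreducible _ h1⟩
  have : Fact (Irreducible (X ^ p - X - C α : F[X])) := ⟨artinSchreier_irreducible _ h2⟩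
  have : Fact (Irreducible (X ^ p - X - C β : F[X])) := ⟨artinSchreier_irreducible _ h3⟩
  obtain ⟨x, y, z, hxyz, h⟩ := halbert α β γ δ hγ hδ
  have hN0 : ∀ (a : F), (X ^ p - X - C a : F[X]) ≠ 0 := fun a =>
    (artinSchreier_monic_natDegree F p (Fact.out : p.Prime).one_lt a).1.ne_zero
  have hn0 : ∀ a : F, Fact (Irreducible (X ^ p - X - C a : F[X])) →
      Algebra.norm F (0 : AdjoinRoot (X ^ p - X - C a : F[X])) = 0 := fun a _ => by
    have : FiniteDimensional F (AdjoinRoot (X ^ p - X - C a : F[X])) :=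
      (AdjoinRoot.powerBasis (hN0 a)).finite
    exact Algebra.norm_zero
  have hx := smul_logDeriv_norm_adjoinRoot _ h1 x
  have hy := smul_logDeriv_norm_adjoinRoot _ h2 y
  have hz := smul_logDeriv_norm_adjoinRoot _ h3 z
  have hx0 : x = 0 → Algebra.norm F x = 0 := fun h => h ▸ hn0 _ ‹_›
  have hy0 : y = 0 → Algebra.norm F y = 0 := fun h => h ▸ hn0 _ ‹_›
  have hz0 : z = 0 → Algebra.norm F z = 0 := fun h => h ▸ hn0 _ ‹_›
  generalize Algebra.norm F x = u at *
  generalize Algebra.norm F y = A at *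
  generalize Algebra.norm F z = B at *
  -- first the degenerate zeros, where the relation between the norms has only two terms
  by_cases hy' : y = 0
  · have hA0 := hy0 hy'
    have hx' : x ≠ 0 := fun hx' => by
      have hz' : z ≠ 0 := fun hz' => hxyz ⟨hx', hy', hz'⟩
      have := hx0 hx'
      have := (hz hz').1
      simp_all
    have hz' : z ≠ 0 := fun hz' => by
      have := hz0 hz'
      have := (hx hx').1
      simp_all
    obtain ⟨hu, hu'⟩ := hx hx'
    obtain ⟨hB0, hB1⟩ := hz hz'
    have huw : u = -(δ * B) := by rw [hA0] at h; linear_combination h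
    change (α + β) • logD u ∈ _ at hu'
    have key := tri_hOne_right p hu' hc hγ
    rw [huw, logD_neg, logD_mul hδ hB0, ← tri_smul_right, tri_add_right,
      tri_swap_right p _ (logD B), hB B hB0 hB1 γ hγ, neg_zero, add_zero] at key
    exact key
  by_cases hz' : z = 0
  · have hB0 := hz0 hz'
    have hx' : x ≠ 0 := fun hx' => by
      have := hx0 hx'
      have := (hy hy').1
      simp_all
    obtain ⟨hu, hu'⟩ := hx hx'
    obtain ⟨hA0, hA1⟩ := hy hy'
    have huv : u = -(γ * A) := by rw [hB0] at h; linear_combination h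
    change (α + β) • logD u ∈ _ at hu'
    have key := tri_hOne_mid p hu' hc hδ
    rw [huv, logD_neg, logD_mul hγ hA0, ← tri_smul_left, tri_add_mid, hA A hA0 hA1 δ hδ,
      add_zero] at key
    exact key
  obtain ⟨hA0, hA1⟩ := hy hy'
  obtain ⟨hB0, hB1⟩ := hz hz'
  have key : tri p ((α + β) • logD c) (logD (γ * A)) (logD (δ * B)) = 0 := by
    by_cases hx' : x = 0
    · have : γ * A = -(δ * B) := by rw [hx0 hx'] at h; linear_combination h
      rw [this, logD_neg, tri_self]
    · obtain ⟨hu, hu'⟩ := hx hx'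
      exact tri_of_add_eq_zero p hc hu (mul_ne_zero hγ hA0) (mul_ne_zero hδ hB0) h hu'
  have hγA := mul_ne_zero hγ hA0
  have hδB := mul_ne_zero hδ hB0
  rw [logD_mul hγ hA0, tri_add_mid, hA A hA0 hA1 _ hδB, add_zero, logD_mul hδ hB0, tri_add_right,
    tri_swap_right p _ (logD B), hB B hB0 hB1 γ hγ, neg_zero, add_zero] at key
  exact key

/-- It suffices to write `s = α + β` so that `hA` and `hB` of `tri_eq_zero_of_albert` hold. For `p` odd
`α = β = s / 2` works, as `s dA/A = 2 α dA/A`. For `p = 2` put `τ = s / c`, `r = 1 / (τ + 1)` and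
`τ = x + y` with `x = (τ + 1) ^ 2 * s` and `y = (τ + 1) ^ 2 * (s - (r ^ 2 - r))`; both `s dx/x` and
`s dy/y` are relations of `H^2(F)`, and `α = c * x`, `β = c * y`. -/
theorem tri_logD_eq_zero
    (halbert : ∀ (α β γ δ : F), γ ≠ 0 → δ ≠ 0 →
      ∃ (x : AdjoinRoot (X ^ p - X - C (α + β) : F[X]))
        (y : AdjoinRoot (X ^ p - X - C α : F[X]))
        (z : AdjoinRoot (X ^ p - X - C β : F[X])),
        ¬(x = 0 ∧ y = 0 ∧ z = 0) ∧
          Algebra.norm F x + γ * Algebra.norm F y + δ * Algebra.norm F z = 0)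
    (s : F) {c γ δ : F} (hc : c ≠ 0) (hγ : γ ≠ 0) (hδ : δ ≠ 0) :
    tri p (s • logD c) (logD γ) (logD δ) = 0 := by
  have hp : p.Prime := Fact.out
  rcases hp.eq_two_or_odd' with rfl | hodd
  · have h2 : (2 : F) = 0 := CharTwo.two_eq_zero
    by_cases hs : s = 0
    · have := tri_artinSchreier 2 (0 : F) hc hγ hδ
      simpa [hs] using this
    by_cases hsc : s = c
    · rw [hsc, smul_logD hc]
      exact tri_hOne 2 (D_mem_hOne 2 c) hγ hδ
    set τ := s / c with hτ
    have hτ1 : τ + 1 ≠ 0 := fun h => hsc <| by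
      have : τ = 1 := by linear_combination h - h2
      rwa [hτ, div_eq_one_iff_eq hc] at this
    -- `dlog` does not see the square `(τ + 1) ^ 2`
    have hsq : ∀ a : F, a ≠ 0 → logD ((τ + 1) ^ 2 * a) = logD a := by
      intro a ha
      rw [logD_mul (pow_ne_zero 2 hτ1) ha, logD, D_pow_char, smul_zero, zero_add]
    set r := 1 / (τ + 1) with hr
    set s' := s - (r ^ 2 - r) with hs'
    have hxy : c * ((τ + 1) ^ 2 * s) + c * ((τ + 1) ^ 2 * s') = s := by
      have e1 : (τ + 1) * r = 1 := by rw [hr]; field_simp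
      have e2 : c * τ = s := by rw [hτ]; field_simp
      rw [hs']
      linear_combination c * (τ + 1) ^ 2 * s * h2 + c * (τ + 1) * e1 -
        c * ((τ + 1) * r + 1) * e1 + e2
    by_cases hs0 : s' = 0
    · have := tri_artinSchreier 2 r hc hγ hδ
      rwa [← sub_eq_zero.1 hs0] at this
    have hx : s • logD ((τ + 1) ^ 2 * s) ∈ hOne F 2 := by
      rw [hsq s hs, smul_logD hs]
      exact D_mem_hOne 2 s
    have hy : s • logD ((τ + 1) ^ 2 * s') ∈ hOne F 2 := by
      rw [hsq s' hs0, (by rw [hs']; ring : s = s' + (r ^ 2 - r)), add_smul, smul_logD hs0]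
      exact (hOne F 2).add_mem (D_mem_hOne 2 s') (artinSchreier_mem_hOne 2 r hs0)
    set x := (τ + 1) ^ 2 * s with hxdef
    set y := (τ + 1) ^ 2 * s' with hydef
    have hx0 : x ≠ 0 := mul_ne_zero (pow_ne_zero 2 hτ1) hs
    have hy0 : y ≠ 0 := mul_ne_zero (pow_ne_zero 2 hτ1) hs0
    refine tri_eq_zero_of_albert 2 halbert (c * x) (c * y) hxy hc hγ hδ ?_ ?_
    -- modulo `s dy/y`, the form `s dc/c` is `α dβ/β + dβ` because `β = c * y`
    · intro A hA hA1 e he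
      have e1 := tri_hOne 2 hy hA he
      have e2 : tri 2 (s • logD (c * y)) (logD A) (logD e) = 0 := by
        nth_rewrite 1 [← hxy]
        rw [add_smul, tri_add_left, tri_smul_left,
          tri_hOne_mid 2 hA1 (mul_ne_zero hc hy0) he, smul_logD (mul_ne_zero hc hy0),
          tri_hOne 2 (D_mem_hOne 2 _) hA he, add_zero]
      rwa [logD_mul hc hy0, smul_add, tri_add_left, e1, add_zero] at e2
    -- likewise `s dc/c` is `dα + β dα/α` modulo `s dx/x`
    · intro B hB hB1 e he
      have e1 := tri_hOne 2 hx hB he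
      have e2 : tri 2 (s • logD (c * x)) (logD B) (logD e) = 0 := by
        nth_rewrite 1 [← hxy]
        rw [add_smul, tri_add_left, tri_smul_left 2 (c * y),
          tri_hOne_mid 2 hB1 (mul_ne_zero hc hx0) he, smul_logD (mul_ne_zero hc hx0),
          tri_hOne 2 (D_mem_hOne 2 _) hB he, add_zero]
      rwa [logD_mul hc hx0, smul_add, tri_add_left, e1, add_zero] at e2
  · have h2 : (2 : F) ≠ 0 := by
      have : ((2 : ℕ) : F) ≠ 0 := by
        rw [Ne, CharP.cast_eq_zero_iff F p, Nat.prime_dvd_prime_iff_eq hp Nat.prime_two]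
        rintro rfl
        exact absurd hodd (by decide)
      exact_mod_cast this
    have : NeZero (2 : F) := ⟨h2⟩
    have hhalf : ∀ A : F, A ≠ 0 → (s / 2) • logD A ∈ hOne F p → ∀ e : F, e ≠ 0 →
        tri p (s • logD c) (logD A) (logD e) = 0 := by
      intro A _ hA e he
      have : s • logD A ∈ hOne F p := by
        rw [← add_halves s, add_smul]
        exact (hOne F p).add_mem hA hA
      rw [tri_smul_left]
      exact tri_hOne_mid p this hc he
    exact tri_eq_zero_of_albert p halbert (s / 2) (s / 2) (add_halves s) hc hγ hδ hhalf hhalf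

end Albert

theorem statement4 (F : Type*) [Field F] (p : ℕ) [Fact p.Prime] [CharP F p]
    (halbert : ∀ (α β γ δ : F), γ ≠ 0 → δ ≠ 0 →
      ∃ (x : AdjoinRoot (X ^ p - X - C (α + β) : F[X]))
        (y : AdjoinRoot (X ^ p - X - C α : F[X]))
        (z : AdjoinRoot (X ^ p - X - C β : F[X])),
        ¬(x = 0 ∧ y = 0 ∧ z = 0) ∧
          Algebra.norm F x + γ * Algebra.norm F y + δ * Algebra.norm F z = 0) :
    Subsingleton (Hgroup F p 3) := by
  have hD : ∀ b x y z : F, b • wedge F 3 ![KaehlerDifferential.D ℤ F x,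
      KaehlerDifferential.D ℤ F y, KaehlerDifferential.D ℤ F z] ∈ hRel F p 3 := by
    intro b x y z
    rw [← wedge_smul_left, ← tri_eq_zero]
    by_cases hx : x = 0
    · rw [hx, map_zero, smul_zero, tri_zero_left]
    by_cases hy : y = 0
    · rw [hy, map_zero, tri_swap_left, tri_zero_left, neg_zero]
    by_cases hz : z = 0
    · rw [hz, map_zero, tri_swap_right, tri_swap_left, tri_zero_left, neg_zero, neg_zero]
    rw [← smul_logD hx, ← smul_logD hy, ← smul_logD hz, ← tri_smul_left, ← tri_smul_right,
      smul_smul, smul_smul, smul_smul]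
    exact tri_logD_eq_zero p halbert _ hx hy hz
  have htop : ∀ ω : ⋀[F]^3 (KaehlerDifferential ℤ F), ω ∈ hRel F p 3 := by
    intro ω
    have hω : ω ∈ Submodule.span F (exteriorPower.ιMulti F 3 ''
        {a | Set.range a ⊆ Set.range (KaehlerDifferential.D ℤ F)}) := by
      rw [exteriorPower.ιMulti_span_of_span F 3 _ (KaehlerDifferential.span_range_derivation ℤ F)]
      trivial
    suffices h : ∀ b : F, b • ω ∈ hRel F p 3 by simpa using h 1
    induction hω using Submodule.span_induction with
    | mem ω h =>
      obtain ⟨a, ha, rfl⟩ := h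
      choose v hv using fun i => ha (Set.mem_range_self i)
      have e : a = ![KaehlerDifferential.D ℤ F (v 0), KaehlerDifferential.D ℤ F (v 1),
          KaehlerDifferential.D ℤ F (v 2)] := by
        ext i; fin_cases i <;> exact (hv _).symm
      intro b
      rw [e]
      exact hD b _ _ _
    | zero => intro b; rw [smul_zero]; exact zero_mem _
    | add x y _ _ hx hy => intro b; rw [smul_add]; exact add_mem (hx b) (hy b)
    | smul a x _ hx => intro b; rw [smul_smul]; exact hx _
  refine ⟨fun a b => ?_⟩
  obtain ⟨a, rfl⟩ := QuotientAddGroup.mk_surjective a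
  obtain ⟨b, rfl⟩ := QuotientAddGroup.mk_surjective b
  exact QuotientAddGroup.eq.2 (htop _)

end
end

section
/- Let F be a field of characteristic 2, let b ∈ F^×, a ∈ F, and let x, y ∈ F be not both zero such that β = x² + xy + ay² is nonzero. Then the quadratic 2-fold Pfister forms ⟨⟨b, a]] and ⟨⟨bβ, a + bβ]] over F are isometric. -/
/-!
Let `K = F[ω]` with `ω² = ω - a`, so that `N(s + tω) = s² + st + at²` is its norm. In
characteristic 2, `⟨⟨b, a]]` is the norm form `N(z) + b N(w)` of the quaternion algebra
`K ⊕ Kj`, `j² = b`. Put `γ = x + yω`, which has norm `β`. Then `j' = γj` and `i' = ω + j'` satisfy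
`j'² = bβ`, `i'² + i' = a + bβ` and `j'i' = (i' + 1)j'`, so they generate the same algebra, whose
norm form in the basis `1, i', j', i'j'` is `⟨⟨bβ, a + bβ]]`. The change of basis
`s + ti' + (u + vi')j' = (s + bβv + tω) + γ(t + u + vω)j` is therefore an isometry. It is
written below in coordinates, with signs chosen so that it is invertible in any characteristic;
only the preservation of the form uses `2 = 0`.
-/

/-!
STATEMENT 6 (Lemma `iso`):
Let `F` be a field of characteristic 2, `b ∈ F^×`, `a ∈ F`, and `x, y ∈ F` not both
zero with `β = x² + xy + ay²` nonzero.  Then the quadratic 2-fold Pfister forms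
`⟨⟨b, a]]` and `⟨⟨bβ, a + bβ]]` over `F` are isometric.

Here `[u,v]` denotes the two-dimensional quadratic form `(s,t) ↦ us² + st + vt²`,
and the quadratic 2-fold Pfister form `⟨⟨c, v]] = ⟨1,c⟩ ⊗ [1,v]` is (on the standard
basis of the tensor product) the orthogonal sum `[1,v] ⊥ c·[1,v]`.
-/

noncomputable section

open QuadraticMap

/-- The two-dimensional quadratic form `[a,b] : (x,y) ↦ ax² + xy + by²`. -/
def twoDimForm (F : Type*) [Field F] (a b : F) : QuadraticForm F (Fin 2 → F) :=
  a • proj 0 0 + proj 0 1 + b • proj 1 1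

/-- The quadratic 2-fold Pfister form `⟨⟨c, b]] = ⟨1,c⟩ ⊗ [1,b] = [1,b] ⊥ c·[1,b]`. -/
def pfister2 (F : Type*) [Field F] (c b : F) :
    QuadraticForm F ((Fin 2 → F) × (Fin 2 → F)) :=
  (twoDimForm F 1 b).prod (c • twoDimForm F 1 b)

theorem twoDimForm_apply (F : Type*) [Field F] (a b : F) (v : Fin 2 → F) :
    twoDimForm F a b v = a * (v 0 * v 0) + v 0 * v 1 + b * (v 1 * v 1) := by
  simp [twoDimForm]

theorem pfister2_apply (F : Type*) [Field F] (c b : F) (p : (Fin 2 → F) × (Fin 2 → F)) :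
    pfister2 F c b p = (p.1 0 * p.1 0 + p.1 0 * p.1 1 + b * (p.1 1 * p.1 1)) +
      c * (p.2 0 * p.2 0 + p.2 0 * p.2 1 + b * (p.2 1 * p.2 1)) := by
  simp [pfister2, twoDimForm_apply]

/-- The change of basis `(s, t, u, v) ↦ (s + bβv + tω, γ(t + u + vω))` of `K × K`, where
`γ = x + yω`; its inverse uses `γ⁻¹ = (x + y - yω) / β`. -/
def quaternionBasisChange (F : Type*) [Field F] (b a x y β : F)
    (hβ : β = x ^ 2 + x * y + a * y ^ 2) (hβ0 : β ≠ 0) :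
    ((Fin 2 → F) × (Fin 2 → F)) ≃ₗ[F] ((Fin 2 → F) × (Fin 2 → F)) where
  toFun p := (![p.1 0 + b * β * p.2 1, p.1 1],
    ![x * (p.1 1 + p.2 0) - a * y * p.2 1, x * p.2 1 + y * (p.1 1 + p.2 0) + y * p.2 1])
  invFun q := (![q.1 0 - b * (x * q.2 1 - y * q.2 0), q.1 1],
    ![((x + y) * q.2 0 + a * y * q.2 1) / β - q.1 1, (x * q.2 1 - y * q.2 0) / β])
  map_add' p q := by
    ext i <;> fin_cases i <;> simp <;> ring
  map_smul' c p := by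
    ext i <;> fin_cases i <;> simp <;> ring
  left_inv p := by
    ext i <;> fin_cases i <;> simp <;> field_simp <;> rw [hβ] <;> ring
  right_inv q := by
    ext i <;> fin_cases i <;> simp <;> field_simp <;> (try rw [hβ]) <;> ring

theorem statement6 (F : Type*) [Field F] [CharP F 2]
    (b : F) (hb : b ≠ 0) (a : F) (x y : F) (hxy : ¬(x = 0 ∧ y = 0))
    (β : F) (hβ : β = x ^ 2 + x * y + a * y ^ 2) (hβ0 : β ≠ 0) :
    QuadraticMap.Equivalent (pfister2 F b a) (pfister2 F (b * β) (a + b * β)) := by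
  have h2 : (2 : F) = 0 := CharTwo.two_eq_zero
  refine QuadraticMap.Equivalent.symm ⟨⟨quaternionBasisChange F b a x y β hβ hβ0, fun p => ?_⟩⟩
  simp only [pfister2_apply, quaternionBasisChange, AddHom.toFun_eq_coe, LinearMap.coe_toAddHom,
    LinearEquiv.coe_coe, LinearEquiv.coe_mk, LinearMap.coe_mk, AddHom.coe_mk,
    Matrix.cons_val_zero, Matrix.cons_val_one]
  -- Multiplicativity of the norm, `N(γ(p + qω)) = β N(p + qω)`, is the `hβ` term below.
  linear_combination (p.1 0 * p.2 1 + p.1 1 * p.2 1 + p.1 1 * p.2 0) * b * β * h2 -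
    b * ((p.1 1 + p.2 0) ^ 2 + (p.1 1 + p.2 0) * p.2 1 + a * p.2 1 ^ 2) * hβ

end
end

section
/- Let F be a field of characteristic 2, let π be a quadratic 2-fold Pfister form over F, and let λ₁, λ₂, λ₃ ∈ F^×. Then the quadratic form ρ = ⟨λ₁, λ₂, λ₃⟩ ⊗ π (of dimension 12) contains an Albert subform, i.e. there is a 6-dimensional nonsingular quadratic form ψ over F with trivial Arf invariant and a quadratic form ψ' such that ρ is isometric to ψ ⊥ ψ'. -/
/-!
STATEMENT 7 (Lemma `suballem`):
Let `F` be a field of characteristic 2, let `π` be a quadratic 2-fold Pfister form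
over `F` and let `λ₁, λ₂, λ₃ ∈ F^×`.  Then the 12-dimensional quadratic form
`ρ = ⟨λ₁,λ₂,λ₃⟩ ⊗ π = λ₁·π ⊥ λ₂·π ⊥ λ₃·π` contains an Albert subform: there is a
6-dimensional nonsingular quadratic form `ψ` over `F` with trivial Arf invariant and a
quadratic form `ψ'` such that `ρ ≃ ψ ⊥ ψ'`.

Here `[u,v]` denotes the two-dimensional quadratic form `(s,t) ↦ us² + st + vt²`; a
quadratic 2-fold Pfister form is `⟨⟨c, b]] = ⟨1,c⟩ ⊗ [1,b] = [1,b] ⊥ c·[1,b]` with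
`c ∈ F^×`, `b ∈ F`.  Every 6-dimensional nonsingular quadratic form over `F` is
isometric to `[a₀,b₀] ⊥ [a₁,b₁] ⊥ [a₂,b₂]` (and each such form is nonsingular); its
Arf invariant is the class of `a₀b₀ + a₁b₁ + a₂b₂` in `F/℘(F)`, so `ψ` is an Albert
form iff `ψ ≃ [a₀,b₀] ⊥ [a₁,b₁] ⊥ [a₂,b₂]` with `a₀b₀ + a₁b₁ + a₂b₂ ∈ ℘(F)`.
-/

/-!
Write `1, u, v, v'` for the standard basis of `π = [1,b] ⊥ c[1,b]`, and `eᵢ ⊗ w` for the copy of `w`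
in the summand `lᵢ π`. The six vectors
`y₁ = e₁ ⊗ 1`, `x₁ = e₁ ⊗ u / l₁ + e₂ ⊗ z v`,
`y₂ = e₂ ⊗ 1`, `x₂ = e₂ ⊗ u / l₂ + e₁ ⊗ (z v + v')`,
`y₃ = e₃ ⊗ 1`, `x₃ = e₃ ⊗ u / l₃`
form three mutually orthogonal pairs with `B(xᵢ, yᵢ) = 1`, for every `z`. Hence they span a
nonsingular 6-dimensional subspace, on which `ρ` is `[l₁, ρ(x₁)] ⊥ [l₂, ρ(x₂)] ⊥ [l₃, ρ(x₃)]`, with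
Arf invariant
`(b + l₁l₂c z²) + (b + l₁l₂c (z² + z + b)) + b = l₁l₂c (z + b) + b`.
The quadratic terms in `z` cancel because the same `z v` occurs in `x₁` and `x₂`, so this is an
affine function of `z` with nonzero slope, and some `z` makes it vanish. The subspace is
nonsingular, so it splits off: `adaptedBasis` extends its basis by one of the orthogonal
complement, obtained by projecting `eᵢ ⊗ v` and `eᵢ ⊗ v'`.
-/

noncomputable section

open QuadraticMap

/-- The Albert form `[a₀,b₀] ⊥ [a₁,b₁] ⊥ [a₂,b₂]`; it is an Albert form precisely
when additionally `a₀b₀ + a₁b₁ + a₂b₂ ∈ ℘(F)` (trivial Arf invariant). -/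
def albertForm (F : Type*) [Field F] (a b : Fin 3 → F) :
    QuadraticForm F ((Fin 2 → F) × ((Fin 2 → F) × (Fin 2 → F))) :=
  (twoDimForm F (a 0) (b 0)).prod
    ((twoDimForm F (a 1) (b 1)).prod (twoDimForm F (a 2) (b 2)))

/-- The coordinate isomorphism of the `12`-dimensional space adapted to the Albert subform. The
three planes of the first factor are spanned by the hyperbolic pairs `(yᵢ, xᵢ)` for the polar form,
and `Fin 6 → F` carries coordinates on their orthogonal complement. The parameter `z` is the one
occurring in `x₁ = e₁ ⊗ u / l₁ + e₂ ⊗ z v` and `x₂ = e₂ ⊗ u / l₂ + e₁ ⊗ (z v + v')`; the target is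
written in the basis `eᵢ ⊗ 1, eᵢ ⊗ u, eᵢ ⊗ v, eᵢ ⊗ v'`. -/
def adaptedBasis (F : Type*) [Field F] (c z l₁ l₂ l₃ : F)
    (hl₁ : l₁ ≠ 0) (hl₂ : l₂ ≠ 0) (hl₃ : l₃ ≠ 0) :
    (((Fin 2 → F) × ((Fin 2 → F) × (Fin 2 → F))) × (Fin 6 → F)) ≃ₗ[F]
      (((Fin 2 → F) × (Fin 2 → F)) ×
        (((Fin 2 → F) × (Fin 2 → F)) × ((Fin 2 → F) × (Fin 2 → F)))) where
  toFun p :=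
    ((![p.1.1 0 + l₂ * c * z * p.2 3, p.1.1 1 / l₁],
      ![z * p.1.2.1 1 + p.2 0, p.1.2.1 1 + p.2 1]),
     (![p.1.2.1 0 + l₁ * c * (p.2 0 + z * p.2 1), p.1.2.1 1 / l₂],
      ![z * p.1.1 1 + p.2 2, p.2 3]),
     (![p.1.2.2 0, p.1.2.2 1 / l₃], ![p.2 4, p.2 5]))
  invFun w :=
    ((![w.1.1 0 - l₂ * c * z * w.2.1.2 1, l₁ * w.1.1 1],
      ![w.2.1.1 0 - l₁ * c * ((w.1.2 0 - z * (l₂ * w.2.1.1 1)) +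
          z * (w.1.2 1 - l₂ * w.2.1.1 1)), l₂ * w.2.1.1 1],
      ![w.2.2.1 0, l₃ * w.2.2.1 1]),
     ![w.1.2 0 - z * (l₂ * w.2.1.1 1), w.1.2 1 - l₂ * w.2.1.1 1,
       w.2.1.2 0 - z * (l₁ * w.1.1 1), w.2.1.2 1, w.2.2.2 0, w.2.2.2 1])
  map_add' p q := by
    ext i <;> fin_cases i <;> simp <;> ring
  map_smul' r p := by
    ext i <;> fin_cases i <;> simp <;> ring
  left_inv p := by
    ext i <;> fin_cases i <;> simp <;> field_simp <;> ring
  right_inv w := by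
    ext i <;> fin_cases i <;> simp <;> field_simp

theorem statement7 (F : Type*) [Field F] [CharP F 2]
    (c : F) (hc : c ≠ 0) (bπ : F) (l₁ l₂ l₃ : F)
    (hl₁ : l₁ ≠ 0) (hl₂ : l₂ ≠ 0) (hl₃ : l₃ ≠ 0) :
    ∃ (a b : Fin 3 → F),
      (∃ t : F, a 0 * b 0 + a 1 * b 1 + a 2 * b 2 = t ^ 2 + t) ∧
      ∃ ψ' : QuadraticForm F (Fin 6 → F),
        QuadraticMap.Equivalent
          ((l₁ • pfister2 F c bπ).prod ((l₂ • pfister2 F c bπ).prod (l₃ • pfister2 F c bπ)))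
          ((albertForm F a b).prod ψ') := by
  -- This value of `z` is the root of `l₁ l₂ c (z + b) + b = 0`.
  obtain ⟨z, hz⟩ : ∃ z : F, l₁ * l₂ * c * (z + bπ) + bπ = 0 :=
    ⟨-bπ / (l₁ * l₂ * c) - bπ, by field_simp; ring⟩
  have h2 : (2 : F) = 0 := CharTwo.two_eq_zero
  let ρ := (l₁ • pfister2 F c bπ).prod ((l₂ • pfister2 F c bπ).prod (l₃ • pfister2 F c bπ))
  let e := adaptedBasis F c z l₁ l₂ l₃ hl₁ hl₂ hl₃
  refine ⟨![l₁, l₂, l₃], ![bπ / l₁ + l₂ * c * z ^ 2,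
    bπ / l₂ + l₁ * c * (z ^ 2 + z + bπ), bπ / l₃], ⟨0, ?_⟩,
    ρ.comp (e.toLinearMap ∘ₗ LinearMap.inr F _ _), ⟨QuadraticMap.IsometryEquiv.symm ⟨e, ?_⟩⟩⟩
  · simp
    field_simp
    linear_combination hz + (bπ + l₁ * l₂ * c * z ^ 2) * h2
  · rintro ⟨⟨x, y, w⟩, v⟩
    simp [ρ, e, adaptedBasis, albertForm, pfister2, twoDimForm]
    field_simp
    ring_nf
    -- The cross terms between the two summands all occur twice, hence vanish.
    simp only [h2, mul_zero, add_zero]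

end
end

section
/- Let F be a field of characteristic 2. Then every quadratic 4-fold Pfister form ⟨⟨δ, γ, β, α]] over F contains an Albert subform, i.e. there is a 6-dimensional nonsingular quadratic form ψ over F with trivial Arf invariant and a quadratic form ψ' such that ⟨⟨δ, γ, β, α]] is isometric to ψ ⊥ ψ'. -/
/-!
The form `⟨⟨β, α]]` is `N ⊥ βN`, where `N = [1, α]` is the norm form of `F[X]/(X² + X + α)`
and `X` has trace 1. For every `z` it contains the plane spanned by `(1, 0)` and `(X, z)`, which
is `[1, α + β N(z)]`; this plane is nonsingular, so it splits off (`smul_pfister2_split`), and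
likewise after scaling by `c ≠ 0`.

Now `⟨⟨δ, γ, β, α]]` is the orthogonal sum of `⟨⟨β, α]]`, `γ⟨⟨β, α]]`, `δ⟨⟨β, α]]` and
`δγ⟨⟨β, α]]`. Splitting one plane off each of the first three summands, with parameters
`z₁`, `z₂` and `0`, gives a 6-dimensional subform of Arf invariant `3α + β (N(z₁) + N(z₂))`.
For `z₁ = bX` and `z₂ = 1 + bX` one has `N(z₁) + N(z₂) = 1 + b`, so `b = α/β + 1` makes the
Arf invariant vanish.
-/

/-!
STATEMENT 8 (Corollary `subalbert`):
Let `F` be a field of characteristic 2.  Then every quadratic 4-fold Pfister form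
`⟨⟨δ, γ, β, α]]` over `F` contains an Albert subform: there is a 6-dimensional
nonsingular quadratic form `ψ` over `F` with trivial Arf invariant and a quadratic
form `ψ'` such that `⟨⟨δ, γ, β, α]] ≃ ψ ⊥ ψ'`.

Here `[u,v]` denotes the two-dimensional quadratic form `(s,t) ↦ us² + st + vt²`, and
the quadratic `n`-fold Pfister form `⟨⟨c₁,…,c_{n−1}, v]] = ⟨1,c₁⟩⊗…⊗⟨1,c_{n−1}⟩⊗[1,v]`
(with `cᵢ ∈ F^×`) is built up by `⟨1,c⟩ ⊗ φ = φ ⊥ c·φ` starting from `[1,v]`.  Every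
6-dimensional nonsingular quadratic form over `F` is isometric to
`[a₀,b₀] ⊥ [a₁,b₁] ⊥ [a₂,b₂]` (and each such form is nonsingular); its Arf invariant
is the class of `a₀b₀ + a₁b₁ + a₂b₂` in `F/℘(F)`, so an Albert form is such a sum
with `a₀b₀ + a₁b₁ + a₂b₂ ∈ ℘(F)`.
-/

noncomputable section

open QuadraticMap

/-- The quadratic 3-fold Pfister form `⟨⟨c₂, c₁, b]] = ⟨⟨c₁,b]] ⊥ c₂·⟨⟨c₁,b]]`. -/
def pfister3 (F : Type*) [Field F] (c₂ c₁ b : F) :=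
  (pfister2 F c₁ b).prod (c₂ • pfister2 F c₁ b)

/-- The quadratic 4-fold Pfister form
`⟨⟨c₃, c₂, c₁, b]] = ⟨⟨c₂, c₁, b]] ⊥ c₃·⟨⟨c₂, c₁, b]]`. -/
def pfister4 (F : Type*) [Field F] (c₃ c₂ c₁ b : F) :=
  (pfister3 F c₂ c₁ b).prod (c₃ • pfister3 F c₂ c₁ b)

/-- For `z = z₀ + z₁X`, the plane `c[1, α + β N(z)]` is an orthogonal summand of `c⟨⟨β, α]]`. -/
lemma smul_pfister2_split (F : Type*) [Field F] [CharP F 2] (β α c z₀ z₁ : F) (hc : c ≠ 0) :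
    ∃ φ : QuadraticForm F (Fin 2 → F),
      QuadraticMap.Equivalent (c • pfister2 F β α)
        ((twoDimForm F c (c⁻¹ * (α + β * (z₀ ^ 2 + z₀ * z₁ + α * z₁ ^ 2)))).prod φ) := by
  have h2 : (2 : F) = 0 := CharTwo.two_eq_zero
  -- A vector `y` of the second copy of `N` becomes orthogonal to the plane once the multiple
  -- `ℓ(y) = β (z₁ y₀ + z₀ y₁)` of `(1, 0)`, its pairing with `(X, z)`, is added to it; hence
  -- the complement carries `c (β N(y) + ℓ(y)²)`.
  refine ⟨c • (β • twoDimForm F 1 α + (β ^ 2 * z₁ ^ 2) • proj 0 0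
    + (β ^ 2 * z₀ ^ 2) • proj 1 1), ⟨⟨?_, ?_⟩⟩⟩
  -- In characteristic 2 subtraction is addition, so these are the coordinates with respect to
  -- `(1, 0)`, `c⁻¹ (X, z)` and the corrected basis of the second copy.
  · exact
    { toFun := fun p =>
        (![p.1 0 - β * (z₁ * (p.2 0 - p.1 1 * z₀) + z₀ * (p.2 1 - p.1 1 * z₁)), c * p.1 1],
          ![p.2 0 - p.1 1 * z₀, p.2 1 - p.1 1 * z₁])
      invFun := fun p =>
        (![p.1 0 + β * (z₁ * p.2 0 + z₀ * p.2 1), c⁻¹ * p.1 1],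
          ![p.2 0 + c⁻¹ * p.1 1 * z₀, p.2 1 + c⁻¹ * p.1 1 * z₁])
      map_add' := by
        intro p q
        ext i <;> fin_cases i <;> simp <;> ring
      map_smul' := by
        intro r p
        ext i <;> fin_cases i <;> simp <;> ring
      left_inv := by
        intro p
        ext i <;> fin_cases i <;> simp [hc]
      right_inv := by
        intro p
        ext i <;> fin_cases i <;> simp [hc] }
  · rintro ⟨p, q⟩
    simp [pfister2, twoDimForm]
    field_simp
    grind

/-- The pieces of four forms, three of them split, regrouped with the split-off parts in front. -/
lemma equivalent_regroup {F M₁ M₂ M₃ M₄ A : Type*} [Field F]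
    [AddCommGroup M₁] [AddCommGroup M₂] [AddCommGroup M₃] [AddCommGroup M₄] [AddCommGroup A]
    [Module F M₁] [Module F M₂] [Module F M₃] [Module F M₄] [Module F A]
    {Q₁ : QuadraticForm F M₁} {Q₂ : QuadraticForm F M₂} {Q₃ : QuadraticForm F M₃}
    {Q₄ : QuadraticForm F M₄} {P₁ P₂ P₃ φ₁ φ₂ φ₃ : QuadraticForm F A}
    (h₁ : Equivalent Q₁ (P₁.prod φ₁)) (h₂ : Equivalent Q₂ (P₂.prod φ₂))
    (h₃ : Equivalent Q₃ (P₃.prod φ₃)) :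
    Equivalent ((Q₁.prod Q₂).prod (Q₃.prod Q₄))
      ((P₁.prod (P₂.prod P₃)).prod (φ₁.prod (φ₂.prod (φ₃.prod Q₄)))) := by
  obtain ⟨e₁⟩ := h₁
  obtain ⟨e₂⟩ := h₂
  obtain ⟨e₃⟩ := h₃
  refine Equivalent.trans ⟨(e₁.prod e₂).prod (e₃.prod (QuadraticMap.IsometryEquiv.refl Q₄))⟩ ⟨⟨?_, ?_⟩⟩
  · exact
    { toFun := fun p =>
        ((p.1.1.1, p.1.2.1, p.2.1.1), (p.1.1.2, p.1.2.2, p.2.1.2, p.2.2))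
      invFun := fun p =>
        (((p.1.1, p.2.1), (p.1.2.1, p.2.2.1)), ((p.1.2.2, p.2.2.2.1), p.2.2.2.2))
      map_add' := fun _ _ => rfl
      map_smul' := fun _ _ => rfl
      left_inv := fun _ => rfl
      right_inv := fun _ => rfl }
  · intro p
    simp
    ring

theorem statement8 (F : Type*) [Field F] [CharP F 2]
    (δ γ β α : F) (hδ : δ ≠ 0) (hγ : γ ≠ 0) (hβ : β ≠ 0) :
    ∃ (a b : Fin 3 → F),
      (∃ t : F, a 0 * b 0 + a 1 * b 1 + a 2 * b 2 = t ^ 2 + t) ∧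
      ∃ ψ' : QuadraticForm F (Fin 10 → F),
        QuadraticMap.Equivalent (pfister4 F δ γ β α) ((albertForm F a b).prod ψ') := by
  have h2 : (2 : F) = 0 := CharTwo.two_eq_zero
  obtain ⟨b, hb⟩ : ∃ b : F, β * (1 + b) = α :=
    ⟨α / β + 1, by field_simp; linear_combination β * h2⟩
  obtain ⟨φ₁, h₁⟩ := smul_pfister2_split F β α 1 0 b one_ne_zero
  obtain ⟨φ₂, h₂⟩ := smul_pfister2_split F β α γ 1 b hγ
  obtain ⟨φ₃, h₃⟩ := smul_pfister2_split F β α δ 0 0 hδ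
  have key := equivalent_regroup (Q₄ := (δ * γ) • pfister2 F β α) h₁ h₂ h₃
  have hπ : pfister4 F δ γ β α =
      (((1 : F) • pfister2 F β α).prod (γ • pfister2 F β α)).prod
        ((δ • pfister2 F β α).prod ((δ * γ) • pfister2 F β α)) := by
    ext p
    simp [pfister4, pfister3]
    ring
  let e : (Fin 10 → F) ≃ₗ[F]
      ((Fin 2 → F) × (Fin 2 → F) × (Fin 2 → F) × (Fin 2 → F) × (Fin 2 → F)) :=
    LinearEquiv.ofFinrankEq _ _ (by simp)
  refine ⟨![1, γ, δ], ![1⁻¹ * (α + β * (0 ^ 2 + 0 * b + α * b ^ 2)),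
      γ⁻¹ * (α + β * (1 ^ 2 + 1 * b + α * b ^ 2)),
      δ⁻¹ * (α + β * (0 ^ 2 + 0 * 0 + α * 0 ^ 2))], ⟨0, ?_⟩,
    (φ₁.prod (φ₂.prod (φ₃.prod ((δ * γ) • pfister2 F β α)))).comp e.toLinearMap, ?_⟩
  · simp
    field_simp
    subst hb
    grind
  · rw [hπ]
    refine key.trans ⟨(QuadraticMap.IsometryEquiv.refl _).prod ⟨e.symm, fun m => ?_⟩⟩
    simp

end
end
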